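/- arXiv:1707.07629 — 9 statements merged into one kernel-verified Lean document; each statement's English description precedes it below -/
import Mathlib

section
/- Let M be an r×c integer matrix of rank r with r ≤ c. Then there exists a c×c unimodular integer matrix U such that MU is in right Hermite normal form, i.e. writing H = MU one has H i j = 0 for all j > i, H i i > 0 for all i, and 0 ≤ H i j < H i i for all j < i. -/
open Matrix

/-- An `n × n` integer matrix is unimodular if its determinant is `1` or `-1`. -/
def Unimodular {n : ℕ} (U : Matrix (Fin n) (Fin n) ℤ) : Prop :=
  U.det = 1 ∨ U.det = -1

/-- An `r × c` integer matrix (`r ≤ c`) is in right Hermite normal form: entries above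
the diagonal are zero, diagonal entries are positive, and entries to the left of the
diagonal are nonnegative and smaller than the diagonal entry of their row. -/
def RHNF {r c : ℕ} (hrc : r ≤ c) (H : Matrix (Fin r) (Fin c) ℤ) : Prop :=
  (∀ (i : Fin r) (j : Fin c), (i : ℕ) < (j : ℕ) → H i j = 0) ∧
  (∀ i : Fin r, 0 < H i (Fin.castLE hrc i)) ∧
  (∀ (i : Fin r) (j : Fin c), (j : ℕ) < (i : ℕ) →
    0 ≤ H i j ∧ H i j < H i (Fin.castLE hrc i))

/-!
Read the rows of `M` as functionals `f₀, …, f_{r-1}` on `ℤ^c`. The columns of a unimodular matrix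
`U` form a basis `b` of `ℤ^c`, and `M * U` has the entries `f i (b j)`, so it is enough to find a
basis for which these are in right Hermite normal form, by induction on `r`. The values of `f₀` form
an ideal generated by some `f₀ y > 0`, hence `ℤ^c = ℤ y ⊕ ker f₀`. The other functionals stay
independent on `ker f₀`, and the induction hypothesis gives a basis of `ker f₀` for them. Adding to
`y` a suitable element of `ker f₀` reduces the first column without changing `f₀ y`.
-/

open Module

section Functionals

variable {R N : Type*} [CommRing R] [IsDomain R] [AddCommGroup N] [Module R N]

theorem finrank_ker_add_one_eq_finrank [Module.Finite R N] {φ : Dual R N} (hφ : φ ≠ 0) :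
    finrank R (LinearMap.ker φ) + 1 = finrank R N := by
  have hrange : finrank R (LinearMap.range φ) = 1 := by
    refine le_antisymm (by simpa using (LinearMap.range φ).finrank_le) ?_
    rwa [Nat.one_le_iff_ne_zero, Ne, Submodule.finrank_eq_zero, LinearMap.range_eq_bot]
  rw [← (LinearMap.ker φ).finrank_quotient_add_finrank, φ.quotKerEquivRange.finrank_eq, hrange,
    add_comm]

theorem linearIndependent_dualRestrict_ker {ι : Type*} {f : ι → Dual R N}
    (hf : LinearIndependent R f) (i₀ : ι) :
    LinearIndependent R
      fun i : {i // i ≠ i₀} => (LinearMap.ker (f i₀)).dualRestrict (f i) := by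
  obtain ⟨y, hy⟩ : ∃ y, f i₀ y ≠ 0 := DFunLike.ne_iff.1 (hf.ne_zero i₀)
  refine (hf.comp _ Subtype.val_injective).map (f := (LinearMap.ker (f i₀)).dualRestrict) ?_
  rw [Set.range_comp, Subtype.range_coe_subtype, Submodule.disjoint_def]
  intro ψ hψ hker
  have hψ_vanish : ∀ x, f i₀ x = 0 → ψ x = 0 := fun x hx =>
    LinearMap.congr_fun (LinearMap.mem_ker.1 hker) ⟨x, hx⟩
  have hprop : f i₀ y • ψ = ψ y • f i₀ := by
    ext x
    have h := hψ_vanish (f i₀ y • x - f i₀ x • y) (by simp [mul_comm])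
    simpa [sub_eq_zero, mul_comm] using h
  have hdisj : Disjoint (Submodule.span R (f '' {i | i ≠ i₀})) (Submodule.span R (f '' {i₀})) :=
    hf.disjoint_span_image (by simp)
  have hzero : f i₀ y • ψ = 0 := by
    refine Submodule.disjoint_def.1 hdisj _ (Submodule.smul_mem _ _ hψ) ?_
    rw [hprop, Set.image_singleton]
    exact Submodule.smul_mem _ _ (Submodule.mem_span_singleton_self _)
  exact (smul_eq_zero.1 hzero).resolve_left hy

theorem exists_basis_eq_cons_of_dvd {n : ℕ} {φ : Dual R N} {y : N} (hy : φ y ≠ 0)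
    (hdvd : ∀ x, φ y ∣ φ x) (b : Basis (Fin n) R (LinearMap.ker φ)) :
    ∃ b' : Basis (Fin (n + 1)) R N, ⇑b' = Fin.cons y ((↑) ∘ b) := by
  refine ⟨Basis.mkFinCons y b ?_ ?_, Basis.coe_mkFinCons _ _ _ _⟩
  · intro a x hx h
    simpa [LinearMap.mem_ker.1 hx, hy] using congrArg φ h
  · intro x
    obtain ⟨a, ha⟩ := hdvd x
    exact ⟨-a, by simp [ha, mul_comm]⟩

theorem linearIndependent_row_of_rank_eq_card {m n : Type*} [Fintype m] [Fintype n]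
    {A : Matrix m n R} (hA : A.rank = Fintype.card m) : LinearIndependent R A.row := by
  classical
  rw [← Matrix.vecMul_injective_iff, ← Matrix.coe_vecMulLinear, ← LinearMap.ker_eq_bot,
    LinearMap.ker_eq_bot']
  intro v hv
  by_contra hv0
  have hrange : LinearMap.range A.mulVecLin ≤ LinearMap.ker (dotProductEquiv R m v) := by
    rintro _ ⟨x, rfl⟩
    change v ⬝ᵥ A *ᵥ x = 0
    rw [Matrix.dotProduct_mulVec, show v ᵥ* A = 0 from hv, zero_dotProduct]
  have hle : A.rank ≤ finrank R (LinearMap.ker (dotProductEquiv R m v)) :=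
    Cardinal.toNat_le_toNat (Submodule.rank_mono hrange)
      ((Submodule.rank_le _).trans_lt (rank_lt_aleph0 R _))
  have hker := finrank_ker_add_one_eq_finrank ((dotProductEquiv R m).map_ne_zero_iff.2 hv0)
  rw [finrank_fintype_fun_eq_card] at hker
  omega

end Functionals

section Integers

variable {N : Type*} [AddCommGroup N]

theorem exists_apply_pos_forall_apply_dvd {φ : Dual ℤ N} (hφ : φ ≠ 0) :
    ∃ y, 0 < φ y ∧ ∀ x, φ y ∣ φ x := by
  obtain ⟨g, hg⟩ := IsPrincipalIdealRing.principal (LinearMap.range φ)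
  have hdvd : ∀ x, g ∣ φ x := fun x =>
    Ideal.mem_span_singleton.1 (hg.le (LinearMap.mem_range_self φ x))
  obtain ⟨y, rfl⟩ : g ∈ LinearMap.range φ := hg.ge (Submodule.mem_span_singleton_self g)
  have hy : φ y ≠ 0 := fun h => hφ (LinearMap.ext fun x => by simpa [h] using hdvd x)
  rcases hy.lt_or_gt with hneg | hpos
  · exact ⟨-y, by simpa using hneg, by simpa using hdvd⟩
  · exact ⟨y, hpos, hdvd⟩

theorem exists_add_apply_mem_Ico_of_triangular {ι : Type*} [LinearOrder ι] {f : ι → Dual ℤ N}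
    {b : ι → N} (htri : ∀ i j, i < j → f i (b j) = 0) (hpos : ∀ i, 0 < f i (b i)) (w : ι → ℤ)
    (s : Finset ι) : ∃ z, ∀ i ∈ s, w i + f i z ∈ Set.Ico 0 (f i (b i)) := by
  induction s using Finset.induction_on_max with
  | empty => simp
  | insert a s hlt ih =>
    obtain ⟨z, hz⟩ := ih
    -- `f i (b a) = 0` for `i < a`, so this correction only affects `f a` among the `f i`, `i ≤ a`.
    refine ⟨z - ((w a + f a z) / f a (b a)) • b a, fun i hi => ?_⟩
    rcases Finset.mem_insert.1 hi with rfl | his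
    · have hmod : w i + f i (z - ((w i + f i z) / f i (b i)) • b i) =
          (w i + f i z) % f i (b i) := by
        rw [Int.emod_def, map_sub, map_smul, smul_eq_mul]
        ring
      rw [hmod]
      exact ⟨Int.emod_nonneg _ (hpos i).ne', Int.emod_lt_of_pos _ (hpos i)⟩
    · simpa [htri i a (hlt i his)] using hz i his

theorem unimodular_iff_isUnit_det {n : ℕ} {U : Matrix (Fin n) (Fin n) ℤ} :
    Unimodular U ↔ IsUnit U.det :=
  Int.isUnit_iff.symm

theorem rhnf_of_submatrix_succ {r c : ℕ} {hrc : r ≤ c}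
    {H : Matrix (Fin (r + 1)) (Fin (c + 1)) ℤ} (hpivot : 0 < H 0 0)
    (hrow : ∀ j : Fin c, H 0 j.succ = 0)
    (hcol : ∀ i : Fin r, H i.succ 0 ∈ Set.Ico 0 (H i.succ (Fin.castLE hrc i).succ))
    (hsub : RHNF hrc (H.submatrix Fin.succ Fin.succ)) : RHNF (Nat.succ_le_succ hrc) H := by
  obtain ⟨hupper, hdiag, hlower⟩ := hsub
  refine ⟨fun i j hij => ?_, fun i => ?_, fun i j hji => ?_⟩
  · induction j using Fin.cases with
    | zero => simp at hij
    | succ j =>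
      induction i using Fin.cases with
      | zero => exact hrow j
      | succ i => exact hupper i j (by simpa using hij)
  · induction i using Fin.cases with
    | zero => exact hpivot
    | succ i => exact hdiag i
  · induction i using Fin.cases with
    | zero => simp at hji
    | succ i =>
      induction j using Fin.cases with
      | zero => exact hcol i
      | succ j => exact hlower i j (by simpa using hji)

theorem exists_basis_rhnf [Module.Free ℤ N] [Module.Finite ℤ N] {r c : ℕ} (hrc : r ≤ c)
    (hN : finrank ℤ N = c) {f : Fin r → Dual ℤ N} (hf : LinearIndependent ℤ f) :
    ∃ b : Basis (Fin c) ℤ N, RHNF hrc (Matrix.of fun i j => f i (b j)) := by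
  induction r generalizing N c with
  | zero => exact ⟨finBasisOfFinrankEq ℤ N hN, fun i => i.elim0, fun i => i.elim0, fun i => i.elim0⟩
  | succ r ih =>
    obtain _ | c := c
    · omega
    have hrc' : r ≤ c := Nat.le_of_succ_le_succ hrc
    have hker : finrank ℤ (LinearMap.ker (f 0)) = c := by
      have := finrank_ker_add_one_eq_finrank (hf.ne_zero 0)
      omega
    have hrestrict : LinearIndependent ℤ
        fun i : Fin r => (LinearMap.ker (f 0)).dualRestrict (f i.succ) :=
      (linearIndependent_dualRestrict_ker hf 0).comp
        (fun i : Fin r => (⟨i.succ, Fin.succ_ne_zero i⟩ : {i : Fin (r + 1) // i ≠ 0}))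
        fun i j hij => Fin.succ_injective _ (congrArg Subtype.val hij)
    obtain ⟨b, hb⟩ := ih hrc' hker hrestrict
    obtain ⟨y, hy, hdvd⟩ := exists_apply_pos_forall_apply_dvd (hf.ne_zero 0)
    obtain ⟨z, hz⟩ := exists_add_apply_mem_Ico_of_triangular
      (f := fun i : Fin r => (LinearMap.ker (f 0)).dualRestrict (f i.succ))
      (b := fun i => b (Fin.castLE hrc' i)) (fun i j hij => hb.1 i _ hij) hb.2.1
      (fun i => f i.succ y) Finset.univ
    have hyz : f 0 (y + (z : N)) = f 0 y := by rw [map_add, LinearMap.mem_ker.1 z.2, add_zero]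
    obtain ⟨b', hb'⟩ := exists_basis_eq_cons_of_dvd (y := y + (z : N)) (hyz.trans_ne hy.ne')
      (by rwa [hyz]) b
    refine ⟨b', rhnf_of_submatrix_succ (hrc := hrc') ?_ (fun j => ?_) (fun i => ?_) ?_⟩
    · simpa [hb', hyz] using hy
    · simp [hb']
    · simpa [hb'] using hz i (Finset.mem_univ i)
    · convert hb using 1
      ext i j
      simp [hb']

end Integers

theorem stmt_0 {r c : ℕ} (hrc : r ≤ c) (M : Matrix (Fin r) (Fin c) ℤ)
    (hrank : M.rank = r) :
    ∃ U : Matrix (Fin c) (Fin c) ℤ, Unimodular U ∧ RHNF hrc (M * U) := by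
  have hrows : LinearIndependent ℤ M.row :=
    linearIndependent_row_of_rank_eq_card (by rw [hrank, Fintype.card_fin])
  have hfunctionals : LinearIndependent ℤ (dotProductEquiv ℤ (Fin c) ∘ M.row) :=
    hrows.map' _ (dotProductEquiv ℤ (Fin c)).ker
  obtain ⟨b, hb⟩ := exists_basis_rhnf hrc (finrank_fin_fun ℤ) hfunctionals
  refine ⟨(Pi.basisFun ℤ (Fin c)).toMatrix b, ?_, hb⟩
  rw [unimodular_iff_isUnit_det, ← Basis.det_apply]
  exact Basis.isUnit_det _ b
end

section
/- Let M be an n×n integer matrix with nonzero determinant. Then there exists an n×n unimodular integer matrix U such that UM is in left Hermite normal form, i.e. UM is lower triangular, every diagonal entry of UM is positive, and 0 ≤ (UM) i j < (UM) j j for all i > j. -/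
open Matrix

/-- A square integer matrix is in left Hermite normal form: it is lower triangular,
its diagonal entries are positive, and each entry below the diagonal is nonnegative
and smaller than the diagonal entry of its column. -/
def LHNF {n : ℕ} (H : Matrix (Fin n) (Fin n) ℤ) : Prop :=
  (∀ i j, i < j → H i j = 0) ∧
  (∀ i, 0 < H i i) ∧
  (∀ i j, j < i → 0 ≤ H i j ∧ H i j < H j j)

/-!
Let `L` be the row lattice of `M`. For each `j`, the `j`-th coordinates of the vectors of `L` that
vanish after `j` form an ideal, which contains `det M` and so has a positive generator `d j`.
Vectors of `L` realising these generators form a lower triangular matrix; reducing each of them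
modulo the earlier ones puts this matrix in Hermite normal form. Its rows span `L`: if a vector of
`L`, reduced modulo them, were nonzero, then its last nonzero coordinate would be a multiple of the
corresponding generator and also reduced modulo it. Finally, two matrices with the same row lattice
and nonzero determinant differ by a unimodular factor.
-/

open OrderDual Submodule

section PivotIdeal

variable {ι R : Type*} [Preorder ι]

/-- The `j`-th pivot ideal of a submodule `L` of `ι → R`: the ideal of `j`-th coordinates of those
vectors of `L` whose coordinates after `j` all vanish. A triangular basis of `L` has generators of
these ideals on its diagonal. -/
def pivotIdeal [Semiring R] (L : Submodule R (ι → R)) (j : ι) : Ideal R :=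
  (L ⊓ Submodule.pi (Set.Ioi j) fun _ ↦ ⊥).map (LinearMap.proj j)

theorem mem_pivotIdeal [Semiring R] {L : Submodule R (ι → R)} {j : ι} {a : R} :
    a ∈ pivotIdeal L j ↔ ∃ x ∈ L, (∀ k, j < k → x k = 0) ∧ x j = a := by
  simp [pivotIdeal, Submodule.mem_pi, and_assoc]

theorem det_mem_pivotIdeal_span_row [CommRing R] [Fintype ι] [DecidableEq ι]
    (M : Matrix ι ι R) (j : ι) : M.det ∈ pivotIdeal (span R (Set.range M.row)) j := by
  have adjugate_row (k : ι) : (M.adjugate j ᵥ* M) k = M.det * (1 : Matrix ι ι R) j k := by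
    rw [← mul_apply_eq_vecMul, adjugate_mul, Matrix.smul_apply, smul_eq_mul]
  refine mem_pivotIdeal.2 ⟨M.adjugate j ᵥ* M, ?_, fun k hjk ↦ ?_, ?_⟩
  · rw [← range_vecMulLinear]
    exact ⟨_, rfl⟩
  · simp [adjugate_row, hjk.ne]
  · simp [adjugate_row]

end PivotIdeal

theorem exists_apply_ne_zero_forall_gt_eq_zero {ι α : Type*} [Preorder ι] [Finite ι] [Zero α]
    {x : ι → α} (hx : x ≠ 0) : ∃ j, x j ≠ 0 ∧ ∀ k, j < k → x k = 0 := by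
  obtain ⟨j, hj⟩ := (Set.toFinite (Function.support x)).exists_maximal
    (Function.support_nonempty_iff.2 hx)
  exact ⟨j, hj.prop, fun k hjk ↦ by_contra fun hk ↦ hj.not_gt hk hjk⟩

theorem apply_eq_zero_of_mem_span_row_image {ι R : Type*} [Preorder ι] [Semiring R]
    {H : Matrix ι ι R} (hH : H.BlockTriangular toDual) {s : Set ι} {k : ι}
    (hs : ∀ j ∈ s, j < k) {y : ι → R} (hy : y ∈ span R (H.row '' s)) : y k = 0 := by
  have hle : span R (H.row '' s) ≤ LinearMap.ker (LinearMap.proj k) :=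
    span_le.2 <| Set.forall_mem_image.2 fun j hj ↦ hH (toDual_lt_toDual.2 (hs j hj))
  exact hle hy

section LowerTriangular

variable {ι R : Type*} [LinearOrder ι] [Ring R] {H : Matrix ι ι R}

-- Subtracting a multiple of row `j` leaves the later coordinates alone, so the coordinates
-- are treated from the last one down.
theorem exists_mem_span_row_image_sub_mem (hH : H.BlockTriangular toDual) {S : ι → Set R}
    (hS : ∀ j a, ∃ q, a - q * H j j ∈ S j) (s : Finset ι) (x : ι → R) :
    ∃ y ∈ span R (H.row '' s), ∀ j ∈ s, (x - y) j ∈ S j := by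
  induction s using Finset.induction_on_max generalizing x with
  | empty => exact ⟨0, by simp⟩
  | insert a s ha ih =>
    obtain ⟨q, hq⟩ := hS a (x a)
    obtain ⟨y, hy, hyS⟩ := ih (x - q • H.row a)
    have hya : y a = 0 := apply_eq_zero_of_mem_span_row_image hH ha hy
    refine ⟨q • H.row a + y, add_mem (smul_mem _ _ (subset_span ?_)) (span_mono ?_ hy), ?_⟩
    · exact Set.mem_image_of_mem _ (Finset.mem_insert_self a s)
    · exact Set.image_mono (Finset.coe_subset.2 (Finset.subset_insert a s))
    · rw [Finset.forall_mem_insert, ← sub_sub]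
      exact ⟨by simpa [hya] using hq, hyS⟩

theorem span_row_eq_of_pivotIdeal_le [Finite ι] {L : Submodule R (ι → R)}
    (hH : H.BlockTriangular toDual) (hHL : ∀ j, H.row j ∈ L)
    (hpivot : ∀ j, pivotIdeal L j ≤ Ideal.span {H j j}) : span R (Set.range H.row) = L := by
  cases nonempty_fintype ι
  have hspan : span R (Set.range H.row) ≤ L := span_le.2 (Set.range_subset_iff.2 hHL)
  refine hspan.antisymm fun x hx ↦ ?_
  have exists_quotient (j : ι) (a : R) :
      ∃ q, a - q * H j j ∈ {r | r ∈ Ideal.span {H j j} → r = 0} := by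
    by_cases ha : a ∈ Ideal.span {H j j}
    · obtain ⟨q, rfl⟩ := Ideal.mem_span_singleton'.1 ha
      exact ⟨q, fun _ ↦ sub_self _⟩
    · exact ⟨0, fun h ↦ absurd (by simpa using h) ha⟩
  obtain ⟨y, hy, hxy⟩ := exists_mem_span_row_image_sub_mem hH exists_quotient Finset.univ x
  rw [Finset.coe_univ, Set.image_univ] at hy
  suffices x - y = 0 from sub_eq_zero.1 this ▸ hy
  by_contra hne
  obtain ⟨j, hj, hjk⟩ := exists_apply_ne_zero_forall_gt_eq_zero hne
  have hmem : (x - y) j ∈ pivotIdeal L j :=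
    mem_pivotIdeal.2 ⟨x - y, sub_mem hx (hspan hy), hjk, rfl⟩
  exact hj (hxy j (Finset.mem_univ j) (hpivot j hmem))

end LowerTriangular

section RowSpan

variable {m n o R : Type*}

theorem exists_mul_eq_of_row_mem_span [Semiring R] [Fintype m] {M : Matrix m n R}
    {N : Matrix o n R} (h : ∀ i, N.row i ∈ span R (Set.range M.row)) :
    ∃ U : Matrix o m R, U * M = N := by
  simp only [← range_vecMulLinear, LinearMap.mem_range, vecMulLinear_apply] at h
  choose U hU using h
  exact ⟨of U, funext fun i ↦ (mul_apply_eq_vecMul _ _ i).trans (hU i)⟩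

theorem exists_isUnit_det_mul_eq_of_span_row_eq [CommRing R] [IsDomain R] [Fintype n]
    [DecidableEq n] {M N : Matrix n n R} (hM : M.det ≠ 0)
    (h : span R (Set.range M.row) = span R (Set.range N.row)) :
    ∃ U : Matrix n n R, IsUnit U.det ∧ U * M = N := by
  obtain ⟨U, hU⟩ : ∃ U, U * M = N :=
    exists_mul_eq_of_row_mem_span fun i ↦ h ▸ subset_span (Set.mem_range_self i)
  obtain ⟨V, hV⟩ : ∃ V, V * N = M :=
    exists_mul_eq_of_row_mem_span fun i ↦ h ▸ subset_span (Set.mem_range_self i)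
  have hdet : V.det * U.det * M.det = 1 * M.det := by
    rw [mul_assoc, ← det_mul, hU, ← det_mul, hV, one_mul]
  exact ⟨U, .of_mul_eq_one_right _ (mul_right_cancel₀ hM hdet), hU⟩

end RowSpan

theorem exists_pos_span_singleton_eq {R : Type*} [CommRing R] [LinearOrder R] [IsOrderedRing R]
    [IsPrincipalIdealRing R] {I : Ideal R} (hI : I ≠ ⊥) : ∃ d, 0 < d ∧ Ideal.span {d} = I := by
  obtain ⟨d, rfl⟩ := IsPrincipalIdealRing.principal I
  have hd : d ≠ 0 := fun h ↦ hI (by simp [h])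
  exact ⟨|d|, abs_pos.2 hd, Ideal.span_singleton_abs d⟩

theorem exists_lowerTriangular_pivotIdeal_eq_span {ι R : Type*} [Preorder ι] [CommRing R]
    [LinearOrder R] [IsOrderedRing R] [IsPrincipalIdealRing R] {L : Submodule R (ι → R)}
    (hL : ∀ j, pivotIdeal L j ≠ ⊥) :
    ∃ G : Matrix ι ι R, G.BlockTriangular toDual ∧ (∀ j, G.row j ∈ L) ∧
      (∀ j, 0 < G j j) ∧ ∀ j, pivotIdeal L j = Ideal.span {G j j} := by
  choose d hd hdL using fun j ↦ exists_pos_span_singleton_eq (hL j)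
  have hd_mem (j : ι) : d j ∈ pivotIdeal L j := hdL j ▸ Ideal.mem_span_singleton_self (d j)
  choose G hGL hG hGd using fun j ↦ mem_pivotIdeal.1 (hd_mem j)
  obtain rfl : d = fun j ↦ G j j := funext fun j ↦ (hGd j).symm
  exact ⟨of G, fun i j hij ↦ hG i j (toDual_lt_toDual.1 hij), hGL, hd, fun j ↦ (hdL j).symm⟩

section Integers

variable {ι : Type*} [LinearOrder ι]

theorem exists_reduced_of_lowerTriangular [Finite ι] {G : Matrix ι ι ℤ}
    (hG : G.BlockTriangular toDual) (hpos : ∀ j, 0 < G j j) :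
    ∃ H : Matrix ι ι ℤ, H.BlockTriangular toDual ∧
      (∀ i, H.row i ∈ span ℤ (Set.range G.row)) ∧ (∀ i, H i i = G i i) ∧
      ∀ i j, j < i → H i j ∈ Set.Ico 0 (G j j) := by
  cases nonempty_fintype ι
  have exists_quotient (j : ι) (a : ℤ) : ∃ q, a - q * G j j ∈ Set.Ico 0 (G j j) := by
    refine ⟨a / G j j, ?_⟩
    rw [mul_comm, ← Int.emod_def]
    exact ⟨Int.emod_nonneg a (hpos j).ne', Int.emod_lt_of_pos a (hpos j)⟩
  choose Y hY hGY using fun i ↦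
    exists_mem_span_row_image_sub_mem hG exists_quotient {j | j < i} (G.row i)
  have hY_zero (i k : ι) (hik : i ≤ k) : Y i k = 0 :=
    apply_eq_zero_of_mem_span_row_image hG
      (fun j hj ↦ (Finset.mem_filter_univ j |>.1 hj).trans_le hik) (hY i)
  refine ⟨G - of Y, fun i k hik ↦ ?_, fun i ↦ ?_, fun i ↦ ?_, fun i j hji ↦ ?_⟩
  · simp [hG hik, hY_zero i k (toDual_lt_toDual.1 hik).le]
  · exact sub_mem (subset_span (Set.mem_range_self i))
      (span_mono (Set.image_subset_range _ _) (hY i))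
  · simp [hY_zero i i le_rfl]
  · exact hGY i j (by simpa using hji)

theorem exists_hermite_span_row_eq [Finite ι] {L : Submodule ℤ (ι → ℤ)}
    (hL : ∀ j, pivotIdeal L j ≠ ⊥) :
    ∃ H : Matrix ι ι ℤ, span ℤ (Set.range H.row) = L ∧ H.BlockTriangular toDual ∧
      (∀ i, 0 < H i i) ∧ ∀ i j, j < i → H i j ∈ Set.Ico 0 (H j j) := by
  obtain ⟨G, hG, hGL, hpos, hpivot⟩ := exists_lowerTriangular_pivotIdeal_eq_span hL
  obtain ⟨H, hH, hHG, hdiag, hred⟩ := exists_reduced_of_lowerTriangular hG hpos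
  have hHL (i : ι) : H.row i ∈ L := span_le.2 (Set.range_subset_iff.2 hGL) (hHG i)
  simp only [← hdiag] at hpos hpivot hred
  exact ⟨H, span_row_eq_of_pivotIdeal_le hH hHL fun j ↦ (hpivot j).le, hH, hpos, hred⟩

theorem stmt_1_general [Fintype ι] (M : Matrix ι ι ℤ) (hM : M.det ≠ 0) :
    ∃ U : Matrix ι ι ℤ, IsUnit U.det ∧ (U * M).BlockTriangular toDual ∧
      (∀ i, 0 < (U * M) i i) ∧ ∀ i j, j < i → (U * M) i j ∈ Set.Ico 0 ((U * M) j j) := by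
  obtain ⟨H, hspan, hH⟩ := exists_hermite_span_row_eq fun j ↦
    Submodule.ne_bot_iff _ |>.2 ⟨M.det, det_mem_pivotIdeal_span_row M j, hM⟩
  obtain ⟨U, hU, rfl⟩ := exists_isUnit_det_mul_eq_of_span_row_eq hM hspan.symm
  exact ⟨U, hU, hH⟩

end Integers

theorem stmt_1 {n : ℕ} (M : Matrix (Fin n) (Fin n) ℤ) (hM : M.det ≠ 0) :
    ∃ U : Matrix (Fin n) (Fin n) ℤ, Unimodular U ∧ LHNF (U * M) := by
  obtain ⟨U, hU, htri, hpos, hred⟩ := stmt_1_general M hM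
  exact ⟨U, Int.isUnit_iff.1 hU, fun _ _ hij ↦ htri hij, hpos, hred⟩
end

section
/- Let M and M′ be n×n integer matrices, both with nonzero determinant and both in left Hermite normal form. If there exists an n×n unimodular matrix U with M = U·M′, then M = M′. -/
open Matrix

/-!
If `v ᵥ* B = w` with `B` lower triangular and `v` vanishing beyond the index `j`, then
`w j = v j * B j j`. Hence, over `ℤ`, a row `w` of the row lattice of `B` that satisfies
`|w j| < |B j j|` for every `j` is zero, together with its coordinates `v`. For two matrices in
left Hermite normal form with the same row lattice, the diagonal entries divide each other and so
coincide; each row of the difference of the two matrices is then such a row `w`.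
-/

section LowerTriangular

variable {m R : Type*} [Fintype m] [LinearOrder m]

theorem vecMul_apply_of_isLowerTriangular [NonUnitalNonAssocSemiring R] {B : Matrix m m R}
    (hB : B.IsLowerTriangular) {v : m → R} {j : m} (hv : ∀ k, j < k → v k = 0) :
    (v ᵥ* B) j = v j * B j j := by
  simp only [vecMul, dotProduct]
  refine Finset.sum_eq_single j (fun k _ hkj => ?_) (by simp)
  rcases hkj.lt_or_gt with hkj | hjk
  · rw [hB hkj, mul_zero]
  · rw [hv k hjk, zero_mul]

theorem mul_apply_self_of_isLowerTriangular [NonUnitalNonAssocSemiring R] {A B : Matrix m m R}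
    (hA : A.IsLowerTriangular) (hB : B.IsLowerTriangular) (i : m) :
    (A * B) i i = A i i * B i i :=
  vecMul_apply_of_isLowerTriangular hB fun _ hik => hA hik

-- Back substitution: once the coordinates beyond `k` are known to vanish, the `k`-th equation is
-- `(v ᵥ* B) k = v k * B k k`, which is why `hv` may assume it.
theorem eq_zero_of_vecMul_of_isLowerTriangular [NonUnitalNonAssocSemiring R] {B : Matrix m m R}
    (hB : B.IsLowerTriangular) {v : m → R} {j : m}
    (hv : ∀ k, j ≤ k → (v ᵥ* B) k = v k * B k k → v k = 0) : v j = 0 := by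
  induction j using WellFoundedGT.induction with
  | ind j ih =>
    have hv_beyond : ∀ k, j < k → v k = 0 := fun k hjk =>
      ih k hjk fun l hkl => hv l (hjk.le.trans hkl)
    exact hv j le_rfl (vecMul_apply_of_isLowerTriangular hB hv_beyond)

theorem isLowerTriangular_of_mul_right [NonUnitalNonAssocSemiring R] [NoZeroDivisors R]
    {A B : Matrix m m R} (hAB : (A * B).IsLowerTriangular) (hB : B.IsLowerTriangular)
    (hdiag : ∀ i, B i i ≠ 0) : A.IsLowerTriangular := by
  intro i j (hij : i < j)
  refine eq_zero_of_vecMul_of_isLowerTriangular (v := A i) hB fun k hjk hk => ?_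
  have hAB_zero : (A i ᵥ* B) k = 0 := hAB (hij.trans_le hjk)
  exact (mul_eq_zero.1 (hk.symm.trans hAB_zero)).resolve_right (hdiag k)

theorem diag_dvd_of_isLowerTriangular_mul [NonUnitalCommSemiring R] [NoZeroDivisors R]
    {A B : Matrix m m R} (hAB : (A * B).IsLowerTriangular) (hB : B.IsLowerTriangular)
    (hdiag : ∀ i, B i i ≠ 0) (i : m) : B i i ∣ (A * B) i i := by
  have hA := isLowerTriangular_of_mul_right hAB hB hdiag
  exact Dvd.intro_left _ (mul_apply_self_of_isLowerTriangular hA hB i).symm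

theorem eq_zero_of_abs_mul_lt {A B : Matrix m m ℤ} (hB : B.IsLowerTriangular)
    (hAB : ∀ i j, |(A * B) i j| < |B j j|) : A = 0 := by
  ext i j
  refine eq_zero_of_vecMul_of_isLowerTriangular (v := A i) hB fun k _ hk => ?_
  have hlt : |A i k| * |B k k| < 1 * |B k k| := by
    rw [← abs_mul, one_mul, ← hk]
    exact hAB i k
  exact Int.abs_lt_one_iff.1 (lt_of_mul_lt_mul_right hlt (abs_nonneg _))

end LowerTriangular

namespace LHNF

variable {n : ℕ} {H H' U : Matrix (Fin n) (Fin n) ℤ}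

theorem isLowerTriangular (hH : LHNF H) : H.IsLowerTriangular :=
  fun i j hij => hH.1 i j hij

theorem diag_pos (hH : LHNF H) (i : Fin n) : 0 < H i i :=
  hH.2.1 i

theorem diag_dvd_of_eq_mul (hH : LHNF H) (hH' : LHNF H') (h : H = U * H') (i : Fin n) :
    H' i i ∣ H i i := by
  subst h
  exact diag_dvd_of_isLowerTriangular_mul hH.isLowerTriangular hH'.isLowerTriangular
    (fun j => (hH'.diag_pos j).ne') i

theorem abs_sub_apply_lt (hH : LHNF H) (hH' : LHNF H') {j : Fin n} (hdiag : H j j = H' j j)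
    (i : Fin n) : |(H - H') i j| < |H' j j| := by
  have hpos := hH'.diag_pos j
  rw [abs_of_pos hpos, Matrix.sub_apply]
  rcases lt_trichotomy i j with hij | rfl | hji
  · simpa only [hH.1 i j hij, hH'.1 i j hij, sub_zero, abs_zero] using hpos
  · simpa only [hdiag, sub_self, abs_zero] using hpos
  · obtain ⟨hnonneg, hlt⟩ := hH.2.2 i j hji
    obtain ⟨hnonneg', hlt'⟩ := hH'.2.2 i j hji
    exact abs_sub_lt_of_nonneg_of_lt hnonneg (hdiag ▸ hlt) hnonneg' hlt'

theorem eq_of_eq_mul_of_diag_eq (hH : LHNF H) (hH' : LHNF H') (h : H = U * H')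
    (hdiag : ∀ i, H i i = H' i i) : H = H' := by
  have hsub : H - H' = (U - 1) * H' := by rw [h, sub_mul, one_mul]
  have hU : U - 1 = 0 := eq_zero_of_abs_mul_lt hH'.isLowerTriangular fun i j =>
    hsub ▸ hH.abs_sub_apply_lt hH' (hdiag j) i
  rw [h, sub_eq_zero.1 hU, one_mul]

end LHNF

theorem stmt_3 {n : ℕ} (M M' : Matrix (Fin n) (Fin n) ℤ)
    (hM : M.det ≠ 0) (hM' : M'.det ≠ 0) (h1 : LHNF M) (h2 : LHNF M')
    (U : Matrix (Fin n) (Fin n) ℤ) (hU : Unimodular U) (h : M = U * M') :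
    M = M' := by
  have hdet : IsUnit U.det := Int.isUnit_iff.2 hU
  have h' : M' = U⁻¹ * M := by rw [h, nonsing_inv_mul_cancel_left U M' hdet]
  have hdiag : ∀ i, M i i = M' i i := fun i =>
    Int.dvd_antisymm (h1.diag_pos i).le (h2.diag_pos i).le
      (h2.diag_dvd_of_eq_mul h1 h' i) (h1.diag_dvd_of_eq_mul h2 h i)
  exact h1.eq_of_eq_mul_of_diag_eq h2 h hdiag
end

section
/- Let A be an r×n integer matrix with 0 < r < n and let d be a positive integer. There exists an (n−r)×n integer matrix X such that the determinant of the n×n matrix [A;X] obtained by stacking A above X equals d or −d, if and only if A has rank r and the greatest divisor of A divides d. -/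
open Matrix

/-- The greatest divisor of an `r × c` integer matrix: the greatest common divisor of
the determinants of all `r × r` submatrices obtained by selecting `r` of the `c`
columns. -/
def greatestDivisor {r c : ℕ} (M : Matrix (Fin r) (Fin c) ℤ) : ℤ :=
  Finset.univ.gcd fun f : Fin r → Fin c => (M.submatrix id f).det

/-- The matrix `[A; X]` obtained by stacking `A` above `X`. -/
def stack {r k n : ℕ} (A : Matrix (Fin r) (Fin n) ℤ) (X : Matrix (Fin k) (Fin n) ℤ) :
    Matrix (Fin (r + k)) (Fin n) ℤ :=
  (Matrix.fromRows A X).submatrix finSumFinEquiv.symm id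

/-!
Over a principal ideal domain the range of `A` is free, so the kernel of `A` has a complement, and a
basis of the whole space adapted to this splitting yields a factorization `A = H * P`, where `H` is
square and `P` is the top part of an invertible matrix `[P; Q]`. Since `P` has a right inverse, the
maximal minors of `A` generate the same ideal as `det H`. Everything then follows from
`det [H * P; D * Q] = det H * det D * det [P; Q]`: with `D = 1` it shows that `det H` divides
`det [A; X]` for every `X`, and with `[P; Q]` invertible and `det D` prescribed, `X = D * Q`
realizes every multiple of `det H` up to a unit.
-/

section DeterminantalIdeal

variable {R m n : Type*} [CommRing R] [Fintype m] [DecidableEq m]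

/-- The ideal of maximal minors of a matrix with at most as many rows as columns. Columns are
selected by arbitrary functions `m → n`, which adds only zeros and sign changes to the minors with
increasing column indices; over a principal ideal domain it is generated by the greatest divisor. -/
def maximalMinorsIdeal (A : Matrix m n R) : Ideal R :=
  Ideal.span (Set.range fun f : m → n => (A.submatrix id f).det)

theorem det_submatrix_mem_maximalMinorsIdeal (A : Matrix m n R) (f : m → n) :
    (A.submatrix id f).det ∈ maximalMinorsIdeal A :=
  Ideal.subset_span ⟨f, rfl⟩

theorem det_mul_mem_maximalMinorsIdeal [Fintype n] (A : Matrix m n R) (W : Matrix n m R) :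
    (A * W).det ∈ maximalMinorsIdeal A := by
  classical
  -- The columns of `A * W` are combinations of columns of `A`; expand by multilinearity.
  have transpose_mul_eq : (A * W)ᵀ = fun i => ∑ j, W j i • Aᵀ j := by
    ext i a
    simp [Matrix.mul_apply, mul_comm]
  have expansion : (A * W).det = ∑ f : m → n, (∏ i, W (f i) i) • (A.submatrix id f).det := by
    rw [← det_transpose, transpose_mul_eq]
    refine (detRowAlternating.toMultilinearMap.map_sum _).trans (Finset.sum_congr rfl fun f _ => ?_)
    rw [MultilinearMap.map_smul_univ, ← det_transpose (A.submatrix id f)]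
    rfl
  rw [expansion]
  exact Submodule.sum_smul_mem _ _ fun f _ => det_submatrix_mem_maximalMinorsIdeal A f

theorem maximalMinorsIdeal_mul_le_span_det (H : Matrix m m R) (P : Matrix m n R) :
    maximalMinorsIdeal (H * P) ≤ Ideal.span {H.det} := by
  refine Ideal.span_le.mpr ?_
  rintro _ ⟨f, rfl⟩
  have factor : (H * P).submatrix id f = H * P.submatrix id f := rfl
  simp only [factor, det_mul]
  exact Ideal.mul_mem_right _ _ (Ideal.mem_span_singleton_self _)

theorem maximalMinorsIdeal_mul_of_mul_eq_one [Fintype n] (H : Matrix m m R) {P : Matrix m n R}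
    {W : Matrix n m R} (hPW : P * W = 1) : maximalMinorsIdeal (H * P) = Ideal.span {H.det} := by
  refine le_antisymm (maximalMinorsIdeal_mul_le_span_det H P) ?_
  rw [Ideal.span_singleton_le_iff_mem]
  simpa [Matrix.mul_assoc, hPW] using det_mul_mem_maximalMinorsIdeal (H * P) W

end DeterminantalIdeal

section Stacking

variable {R m k n : Type*} [CommRing R] [Fintype m] [DecidableEq m] [Fintype k] [DecidableEq k]

theorem det_fromRows_mul_mul (e : m ⊕ k ≃ n) (H : Matrix m m R) (D : Matrix k k R)
    (P : Matrix m n R) (Q : Matrix k n R) :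
    ((fromRows (H * P) (D * Q)).submatrix id e).det =
      H.det * D.det * ((fromRows P Q).submatrix id e).det := by
  have factor : (fromRows (H * P) (D * Q)).submatrix id e =
      fromBlocks H 0 0 D * (fromRows P Q).submatrix id e := by
    rw [← submatrix_id_id (fromBlocks H 0 0 D), ← submatrix_mul _ _ id id e Function.bijective_id,
      fromBlocks_mul_fromRows]
    simp
  rw [factor, det_mul, det_fromBlocks_zero₂₁]

theorem exists_mul_eq_det_fromRows_smul_one [Fintype n] (e : m ⊕ k ≃ n) (A : Matrix m n R)
    (X : Matrix k n R) :
    ∃ W : Matrix n m R, A * W = ((fromRows A X).submatrix id e).det • (1 : Matrix m m R) := by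
  set S := (fromRows A X).submatrix id e
  refine ⟨S.adjugate.submatrix e.symm Sum.inl, ?_⟩
  calc A * S.adjugate.submatrix e.symm Sum.inl
      = (S * S.adjugate).submatrix Sum.inl Sum.inl := by
        rw [submatrix_mul _ _ Sum.inl e.symm Sum.inl e.symm.bijective]
        congr 1
        ext i j
        simp [S]
    _ = S.det • (1 : Matrix m m R) := by
        rw [mul_adjugate, ← submatrix_one (Sum.inl : m → m ⊕ k) Sum.inl_injective]
        rfl

theorem rank_eq_card_of_det_fromRows_ne_zero [IsDomain R] [Fintype n] (e : m ⊕ k ≃ n)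
    {A : Matrix m n R} {X : Matrix k n R} (h : ((fromRows A X).submatrix id e).det ≠ 0) :
    A.rank = Fintype.card m := by
  obtain ⟨W, hW⟩ := exists_mul_eq_det_fromRows_smul_one e A X
  have hdet : (A * W).det ≠ 0 := by
    rw [hW, det_smul, det_one, mul_one]
    exact pow_ne_zero _ h
  exact le_antisymm A.rank_le_card_height (rank_of_det_ne_zero hdet ▸ A.rank_mul_le_left W)

theorem exists_matrix_det_eq [Nonempty k] (c : R) : ∃ D : Matrix k k R, D.det = c := by
  inhabit k
  refine ⟨diagonal (Function.update 1 default c), ?_⟩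
  rw [det_diagonal, Finset.prod_update_of_mem (Finset.mem_univ _)]
  simp

end Stacking

section PrincipalIdealDomain

variable {R m k n : Type*} [CommRing R] [IsDomain R] [IsPrincipalIdealRing R] [Fintype m]
  [Fintype k]

theorem exists_basis_sum_map_inr_eq_zero {M N : Type*} [AddCommGroup M] [Module R M]
    [Module.Free R M] [Module.Finite R M] [AddCommGroup N] [Module R N] [Module.IsTorsionFree R N]
    (f : M →ₗ[R] N) (hM : Module.finrank R M = Fintype.card m + Fintype.card k)
    (hf : Module.finrank R (LinearMap.range f) = Fintype.card m) :
    ∃ b : Module.Basis (m ⊕ k) R M, ∀ j, f (b (Sum.inr j)) = 0 := by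
  have hker : Module.finrank R (LinearMap.ker f) = Fintype.card k := by
    have hsum := (LinearMap.ker f).finrank_quotient_add_finrank
    rw [f.quotKerEquivRange.finrank_eq] at hsum
    omega
  let bRange := (Module.finBasisOfFinrankEq R _ hf).reindex (Fintype.equivFin m).symm
  let bKer := (Module.finBasisOfFinrankEq R _ hker).reindex (Fintype.equivFin k).symm
  let b := bKer.sumQuot (bRange.map f.quotKerEquivRange.symm)
  refine ⟨b.reindex (Equiv.sumComm k m), fun j => ?_⟩
  have hb : b.reindex (Equiv.sumComm k m) (Sum.inr j) = bKer j := by simp [b]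
  rw [hb]
  exact (bKer j).2

variable [Fintype n] [DecidableEq m] [DecidableEq k]

theorem exists_eq_mul_isUnit_det_fromRows (e : m ⊕ k ≃ n) {A : Matrix m n R}
    (hA : A.rank = Fintype.card m) :
    ∃ (H : Matrix m m R) (P : Matrix m n R) (Q : Matrix k n R),
      A = H * P ∧ IsUnit ((fromRows P Q).submatrix id e).det := by
  classical
  have hcard : Module.finrank R (n → R) = Fintype.card m + Fintype.card k := by
    rw [Module.finrank_fintype_fun_eq_card, ← Fintype.card_sum, Fintype.card_congr e]
  obtain ⟨b, hb⟩ := exists_basis_sum_map_inr_eq_zero A.mulVecLin hcard hA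
  let U := b.toMatrix (Pi.basisFun R n)
  let V := (Pi.basisFun R n).toMatrix b
  have hVU : V * U = 1 := Module.Basis.toMatrix_mul_toMatrix_flip _ _
  have hUV : U * V = 1 := Module.Basis.toMatrix_mul_toMatrix_flip _ _
  have hAV : (A * V).toCols₂ = 0 := by
    ext i j
    exact congrFun (hb j) i
  refine ⟨(A * V).toCols₁, U.toRows₁, U.toRows₂, ?_, ?_⟩
  · calc
      A = A * V * U := by rw [Matrix.mul_assoc, hVU, Matrix.mul_one]
      _ = (A * V).toCols₁ * U.toRows₁ + (A * V).toCols₂ * U.toRows₂ := by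
        rw [← fromCols_mul_fromRows, fromCols_toCols, fromRows_toRows]
      _ = (A * V).toCols₁ * U.toRows₁ := by rw [hAV, Matrix.zero_mul, add_zero]
  · rw [fromRows_toRows]
    refine isUnit_det_of_right_inverse (B := V.submatrix e id) ?_
    rw [submatrix_mul_equiv, hUV, submatrix_id_id]

theorem exists_eq_mul_span_det_eq_maximalMinorsIdeal (e : m ⊕ k ≃ n)
    {A : Matrix m n R} (hA : A.rank = Fintype.card m) :
    ∃ (H : Matrix m m R) (P : Matrix m n R) (Q : Matrix k n R), A = H * P ∧
      IsUnit ((fromRows P Q).submatrix id e).det ∧ maximalMinorsIdeal A = Ideal.span {H.det} := by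
  obtain ⟨H, P, Q, rfl, hPQ⟩ := exists_eq_mul_isUnit_det_fromRows e hA
  obtain ⟨W, hW⟩ := exists_mul_eq_det_fromRows_smul_one e P Q
  obtain ⟨c, hc⟩ := hPQ.exists_right_inv
  have hP : P * (c • W) = 1 := by rw [Matrix.mul_smul, hW, smul_smul, mul_comm, hc, one_smul]
  exact ⟨H, P, Q, rfl, hPQ, maximalMinorsIdeal_mul_of_mul_eq_one H hP⟩

theorem stmt_6_general [Nonempty k] (e : m ⊕ k ≃ n) (A : Matrix m n R) {d : R} (hd : d ≠ 0) :
    (∃ X : Matrix k n R, Associated ((fromRows A X).submatrix id e).det d) ↔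
      A.rank = Fintype.card m ∧ d ∈ maximalMinorsIdeal A := by
  constructor
  · rintro ⟨X, hX⟩
    have hA := rank_eq_card_of_det_fromRows_ne_zero e (hX.ne_zero_iff.mpr hd)
    obtain ⟨H, P, Q, rfl, -, hideal⟩ := exists_eq_mul_span_det_eq_maximalMinorsIdeal e hA
    have hdet := det_fromRows_mul_mul e H 1 P X
    rw [Matrix.one_mul, mul_assoc] at hdet
    rw [hideal, Ideal.mem_span_singleton]
    exact ⟨hA, (Dvd.intro _ hdet.symm).trans hX.dvd⟩
  · rintro ⟨hA, hdA⟩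
    obtain ⟨H, P, Q, rfl, hPQ, hideal⟩ := exists_eq_mul_span_det_eq_maximalMinorsIdeal e hA
    rw [hideal, Ideal.mem_span_singleton] at hdA
    obtain ⟨c, rfl⟩ := hdA
    obtain ⟨D, rfl⟩ := exists_matrix_det_eq (k := k) c
    refine ⟨D * Q, ?_⟩
    rw [det_fromRows_mul_mul]
    exact associated_mul_unit_left _ _ hPQ

end PrincipalIdealDomain

theorem span_range_eq_span_gcd {R ι : Type*} [CommRing R] [IsBezout R] [NormalizedGCDMonoid R]
    [Fintype ι] (f : ι → R) : Ideal.span (Set.range f) = Ideal.span {Finset.univ.gcd f} := by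
  refine le_antisymm (Ideal.span_le.mpr ?_) ?_
  · rintro _ ⟨i, rfl⟩
    exact Ideal.mem_span_singleton.mpr (Finset.gcd_dvd (Finset.mem_univ i))
  · obtain ⟨g, hg⟩ := Finset.univ.gcd_eq_sum_mul f
    rw [Ideal.span_singleton_le_iff_mem, hg]
    exact sum_mem fun i _ => Ideal.mul_mem_right _ _ (Ideal.subset_span ⟨i, rfl⟩)

theorem mem_maximalMinorsIdeal_iff_greatestDivisor_dvd {r c : ℕ} (A : Matrix (Fin r) (Fin c) ℤ)
    (d : ℤ) : d ∈ maximalMinorsIdeal A ↔ greatestDivisor A ∣ d := by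
  rw [maximalMinorsIdeal, span_range_eq_span_gcd, Ideal.mem_span_singleton, greatestDivisor]

theorem det_stack {r k : ℕ} (A : Matrix (Fin r) (Fin (r + k)) ℤ)
    (X : Matrix (Fin k) (Fin (r + k)) ℤ) :
    (stack A X).det = ((fromRows A X).submatrix id finSumFinEquiv).det := by
  rw [← det_submatrix_equiv_self finSumFinEquiv (stack A X)]
  simp [stack]

/-- Writing `n = r + k` with `0 < r` and `0 < k` (so `0 < r < n`):  the equation
`|det [A; X]| = d` has an integer solution `X` iff `A` has rank `r` and the
greatest divisor of `A` divides `d`. -/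
theorem stmt_6 {r k : ℕ} (hr : 0 < r) (hk : 0 < k)
    (A : Matrix (Fin r) (Fin (r + k)) ℤ) (d : ℤ) (hd : 0 < d) :
    (∃ X : Matrix (Fin k) (Fin (r + k)) ℤ,
        (stack A X).det = d ∨ (stack A X).det = -d) ↔
      (A.rank = r ∧ greatestDivisor A ∣ d) := by
  have : Nonempty (Fin k) := ⟨⟨0, hk⟩⟩
  simpa [det_stack, mem_maximalMinorsIdeal_iff_greatestDivisor_dvd, Int.associated_iff] using
    stmt_6_general finSumFinEquiv A hd.ne'
end

section
/- Let A be an r×n integer matrix of rank r with 0 < r < n whose greatest divisor equals 1 (i.e. A is a prime matrix). Then for every positive integer d there exists an (n−r)×n integer matrix X such that the determinant of the stacked n×n matrix [A;X] equals d or −d. -/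
open Matrix

/-!
If the maximal minors of `A` generate the unit ideal, the corresponding combination of their
adjugates is a right inverse of `A`, so `A` is a surjection onto a free module and its kernel is a
direct summand. Over a principal ideal domain the kernel is free, and the coordinates of the
projection onto it, in any basis, are the rows completing `A` to an invertible matrix. Multiplying
these rows by a matrix of determinant `d` times a unit then produces every determinant `d`.
-/

/-- A matrix over a commutative ring is prime if its maximal minors generate the unit ideal; over
`ℤ` this says that their greatest common divisor is `1`. The columns of a minor are chosen by an
arbitrary map, since repeated columns contribute only `0` and reordered ones only a sign. -/
def IsPrimeMatrix {m ι R : Type*} [Fintype m] [DecidableEq m] [CommRing R]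
    (A : Matrix m ι R) : Prop :=
  Ideal.span (Set.range fun f : m → ι ↦ (A.submatrix id f).det) = ⊤

theorem span_singleton_finset_gcd {α R : Type*} [CommRing R] [IsBezout R] [NormalizedGCDMonoid R]
    (s : Finset α) (f : α → R) : Ideal.span {s.gcd f} = Ideal.span (f '' s) := by
  apply le_antisymm
  · obtain ⟨c, hc⟩ := s.gcd_eq_sum_mul f
    rw [Ideal.span_singleton_le_iff_mem, hc]
    exact Ideal.sum_mem _ fun a ha ↦
      Ideal.mul_mem_right _ _ (Ideal.subset_span (Set.mem_image_of_mem f ha))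
  · rw [Ideal.span_le, Set.image_subset_iff]
    exact fun a ha ↦ Ideal.mem_span_singleton.mpr (Finset.gcd_dvd ha)

theorem isPrimeMatrix_iff_greatestDivisor_eq_one {r n : ℕ} {A : Matrix (Fin r) (Fin n) ℤ} :
    IsPrimeMatrix A ↔ greatestDivisor A = 1 := by
  rw [IsPrimeMatrix, ← Set.image_univ, ← Finset.coe_univ, ← span_singleton_finset_gcd,
    Ideal.span_singleton_eq_top, ← normalize_eq_one, Finset.normalize_gcd, greatestDivisor]

theorem IsPrimeMatrix.exists_mul_eq_one {m ι R : Type*} [Fintype m] [DecidableEq m] [Fintype ι]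
    [CommRing R] {A : Matrix m ι R} (hA : IsPrimeMatrix A) : ∃ B : Matrix ι m R, A * B = 1 := by
  classical
  obtain ⟨c, hc⟩ := Ideal.mem_span_range_iff_exists_fun.mp ((Ideal.eq_top_iff_one _).mp hA)
  let columns (f : m → ι) : Matrix ι m R := (1 : Matrix ι ι R).submatrix id f
  have mul_columns (f : m → ι) : A * columns f = A.submatrix id f := by
    ext i j
    simp [columns, Matrix.mul_apply, Matrix.one_apply]
  refine ⟨∑ f, c f • (columns f * (A.submatrix id f).adjugate), ?_⟩
  calc A * ∑ f, c f • (columns f * (A.submatrix id f).adjugate)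
    _ = ∑ f, (c f * (A.submatrix id f).det) • (1 : Matrix m m R) := by
      simp only [Matrix.mul_sum, Matrix.mul_smul, ← Matrix.mul_assoc, mul_columns,
        Matrix.mul_adjugate, smul_smul]
    _ = 1 := by rw [← Finset.sum_smul, hc, one_smul]

theorem exists_linearEquiv_ker_prod {R M P : Type*} [Ring R] [AddCommGroup M] [Module R M]
    [AddCommGroup P] [Module R P] [Module.Projective R P] {g : M →ₗ[R] P}
    (hg : Function.Surjective g) :
    ∃ φ : M ≃ₗ[R] LinearMap.ker g × P, ∀ x, (φ x).2 = g x := by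
  obtain ⟨s, hs⟩ := Module.projective_lifting_property g LinearMap.id hg
  let φ := g.exact_subtype_ker_map.splitSurjectiveEquiv (Submodule.subtype_injective _) ⟨s, hs⟩
  exact ⟨φ.1, fun x ↦ (LinearMap.congr_fun φ.2.2 x).symm⟩

theorem matrix_det_surjective {n R : Type*} [Fintype n] [DecidableEq n] [Nonempty n]
    [CommRing R] : Function.Surjective (det : Matrix n n R → R) := by
  intro d
  obtain ⟨i⟩ := ‹Nonempty n›
  exact ⟨diagonal (Function.update 1 i d), by simp [det_diagonal, Finset.prod_update_of_mem]⟩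

section

variable {m n ι R : Type*} [Fintype ι] [DecidableEq ι] [CommRing R] (e : m ⊕ n ≃ ι)

theorem exists_isUnit_det_fromRows_of_basis_ker [Finite m] [Finite n] {A : Matrix m ι R}
    (hA : Function.Surjective A.mulVecLin) (b : Module.Basis n R (LinearMap.ker A.mulVecLin)) :
    ∃ Y : Matrix n ι R, IsUnit ((fromRows A Y).submatrix e.symm id).det := by
  obtain ⟨φ, hφ⟩ := exists_linearEquiv_ker_prod hA
  let Y : Matrix n ι R :=
    LinearMap.toMatrix' (b.equivFun.toLinearMap ∘ₗ LinearMap.fst R _ _ ∘ₗ φ.toLinearMap)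
  have Y_mulVec (v : ι → R) : Y *ᵥ v = b.equivFun (φ v).1 := LinearMap.toMatrix'_mulVec _ v
  refine ⟨Y, (isUnit_iff_isUnit_det _).mp (mulVec_surjective_iff_isUnit.mp fun w ↦ ?_)⟩
  let v := φ.symm (b.equivFun.symm (w ∘ e ∘ Sum.inr), w ∘ e ∘ Sum.inl)
  have A_mulVec_v : A *ᵥ v = w ∘ e ∘ Sum.inl := by
    rw [← mulVecLin_apply, ← hφ, φ.apply_symm_apply]
  have Y_mulVec_v : Y *ᵥ v = w ∘ e ∘ Sum.inr := by
    rw [Y_mulVec, φ.apply_symm_apply, b.equivFun.apply_symm_apply]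
  refine ⟨v, ?_⟩
  calc (fromRows A Y).submatrix e.symm id *ᵥ v
    _ = (fromRows A Y *ᵥ v) ∘ e.symm := submatrix_mulVec_equiv _ v e.symm (Equiv.refl ι)
    _ = (w ∘ e) ∘ e.symm := by
      rw [fromRows_mulVec, A_mulVec_v, Y_mulVec_v]
      exact congrArg (· ∘ e.symm) (Sum.elim_comp_inl_inr (w ∘ e))
    _ = w := by rw [Function.comp_assoc, e.self_comp_symm, Function.comp_id]

theorem exists_isUnit_det_fromRows_of_free_ker [Finite m] [Finite n] [Nontrivial R]
    {A : Matrix m ι R} (hA : Function.Surjective A.mulVecLin)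
    [Module.Free R (LinearMap.ker A.mulVecLin)] :
    ∃ Y : Matrix n ι R, IsUnit ((fromRows A Y).submatrix e.symm id).det := by
  have := Fintype.ofFinite m
  have := Fintype.ofFinite n
  obtain ⟨φ, -⟩ := exists_linearEquiv_ker_prod hA
  have : Module.Finite R (LinearMap.ker A.mulVecLin) :=
    .of_surjective (LinearMap.fst R _ _ ∘ₗ φ.toLinearMap) (Prod.fst_surjective.comp φ.surjective)
  have finrank_ker : Module.finrank R (LinearMap.ker A.mulVecLin) = Fintype.card n := by
    have finrank_eq := φ.finrank_eq
    rw [Module.finrank_prod, Module.finrank_pi, Module.finrank_pi, ← Fintype.card_congr e,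
      Fintype.card_sum] at finrank_eq
    lia
  exact exists_isUnit_det_fromRows_of_basis_ker e hA
    ((Module.finBasisOfFinrankEq R _ finrank_ker).reindex (Fintype.equivFin n).symm)

theorem IsPrimeMatrix.exists_isUnit_det_fromRows [Fintype m] [DecidableEq m] [Finite n]
    [IsDomain R] [IsPrincipalIdealRing R] {A : Matrix m ι R} (hA : IsPrimeMatrix A) :
    ∃ Y : Matrix n ι R, IsUnit ((fromRows A Y).submatrix e.symm id).det :=
  exists_isUnit_det_fromRows_of_free_ker e
    (mulVec_surjective_iff_exists_right_inverse.mpr hA.exists_mul_eq_one)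

theorem det_fromRows_mul [Finite m] [Fintype n] [DecidableEq n] (A : Matrix m ι R)
    (D : Matrix n n R) (Y : Matrix n ι R) :
    ((fromRows A (D * Y)).submatrix e.symm id).det =
      D.det * ((fromRows A Y).submatrix e.symm id).det := by
  classical
  have := Fintype.ofFinite m
  have factorization : (fromRows A (D * Y)).submatrix e.symm id =
      (fromBlocks 1 0 0 D).submatrix e.symm e.symm * (fromRows A Y).submatrix e.symm id := by
    rw [submatrix_mul_equiv, fromBlocks_mul_fromRows]
    simp only [Matrix.one_mul, Matrix.zero_mul, add_zero, zero_add]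
  rw [factorization, det_mul, det_submatrix_equiv_self, det_fromBlocks_zero₂₁, det_one, one_mul]

theorem stmt_7_general [Fintype m] [DecidableEq m] [Finite n] [Nonempty n] [IsDomain R]
    [IsPrincipalIdealRing R] {A : Matrix m ι R} (hA : IsPrimeMatrix A) (d : R) :
    ∃ X : Matrix n ι R, ((fromRows A X).submatrix e.symm id).det = d := by
  classical
  have := Fintype.ofFinite n
  obtain ⟨Y, u, hu⟩ := hA.exists_isUnit_det_fromRows e
  obtain ⟨D, hD⟩ := matrix_det_surjective (n := n) (d * ↑u⁻¹)
  exact ⟨D * Y, by rw [det_fromRows_mul, hD, ← hu, Units.inv_mul_cancel_right]⟩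

end

/-- If `A` is a prime matrix (greatest divisor `1`) of full rank, then for every
positive integer `d` the equation `|det [A; X]| = d` is solvable. -/
theorem stmt_7 {r k : ℕ} (hr : 0 < r) (hk : 0 < k)
    (A : Matrix (Fin r) (Fin (r + k)) ℤ) (hrank : A.rank = r)
    (hprime : greatestDivisor A = 1) (d : ℤ) (hd : 0 < d) :
    ∃ X : Matrix (Fin k) (Fin (r + k)) ℤ,
      (stack A X).det = d ∨ (stack A X).det = -d := by
  have : Nonempty (Fin k) := Fin.pos_iff_nonempty.mp hk
  exact (stmt_7_general finSumFinEquiv (isPrimeMatrix_iff_greatestDivisor_eq_one.mpr hprime) d).imp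
    fun _ ↦ .inl
end

section
/- Let A be an r×n integer matrix of rank r with 0 < r < n, and let d be a positive integer divisible by the greatest divisor of A. Then there exists a finite set S₁, …, S_N of solutions of the equation |det [A;X]| = d such that every solution X is L-A-equivalent to exactly one of the S_i; that is, the L-A-equivalence classes form a finite partition of the set of all solutions. -/
open Matrix

/-- `X` is a solution of `|det [A; X]| = d`. -/
def IsSolution {r k : ℕ} (A : Matrix (Fin r) (Fin (r + k)) ℤ) (d : ℤ)
    (X : Matrix (Fin k) (Fin (r + k)) ℤ) : Prop :=
  (stack A X).det = d ∨ (stack A X).det = -d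

/-- Two solutions `X`, `X'` are L-A-equivalent if `[A; X] = U · [A; X']` for some
unimodular `U`. -/
def LAEquiv {r k : ℕ} (A : Matrix (Fin r) (Fin (r + k)) ℤ)
    (X X' : Matrix (Fin k) (Fin (r + k)) ℤ) : Prop :=
  ∃ U : Matrix (Fin (r + k)) (Fin (r + k)) ℤ, Unimodular U ∧ stack A X = U * stack A X'

/-!
If `N` is a square matrix whose determinant `d` is not a zero divisor and `M = N + d • C`, then
`d • C = C * adj N * N` gives `M = (1 + C * adj N) * N`; when moreover `det M` is associated to
`d`, cancelling `d` in the determinants shows that `1 + C * adj N` is invertible. So matrices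
with determinant associated to `d` that agree modulo `d` are left-equivalent, and there are only
finitely many residues modulo `d`.
-/

theorem exists_finset_existsUnique_map_eq {α β : Type*} {f : α → β} {T : Set α}
    (hT : (f '' T).Finite) :
    ∃ S : Finset α, (∀ y ∈ S, y ∈ T) ∧ ∀ x ∈ T, ∃! y, y ∈ S ∧ f x = f y := by
  obtain ⟨S, hST, hS⟩ := (Set.surjOn_image f T).exists_bijOn_subset
  lift S to Finset α using hS.finite_iff_finite.mpr hT
  refine ⟨S, hST, fun x hx ↦ ?_⟩
  obtain ⟨y, hy, hyx⟩ := hS.surjOn (Set.mem_image_of_mem f hx)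
  exact ⟨y, ⟨hy, hyx.symm⟩, fun z ⟨hz, hxz⟩ ↦ hS.injOn hz hy (hxz.symm.trans hyx.symm)⟩

section LeftEquivalence

variable {n R : Type*} [Fintype n] [DecidableEq n] [CommRing R]

theorem mem_orbit_GL_iff {M N : Matrix n n R} :
    M ∈ MulAction.orbit (GL n R) N ↔ ∃ U : Matrix n n R, IsUnit U.det ∧ M = U * N := by
  simp_rw [← isUnit_iff_isUnit_det]
  constructor
  · rintro ⟨g, rfl⟩
    exact ⟨g, g.isUnit, rfl⟩
  · rintro ⟨_, ⟨g, rfl⟩, rfl⟩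
    exact ⟨g, rfl⟩

theorem mem_orbit_GL_of_det_dvd_sub {M N : Matrix n n R} (hN : N.det ∈ nonZeroDivisors R)
    (hdet : Associated N.det M.det) (hdvd : ∀ i j, N.det ∣ M i j - N i j) :
    M ∈ MulAction.orbit (GL n R) N := by
  choose C hC using hdvd
  have hM : M = (1 + of C * N.adjugate) * N := calc
    M = N + N.det • of C := by
      ext i j
      simp [← hC]
    _ = (1 + of C * N.adjugate) * N := by
      rw [add_mul, one_mul, Matrix.mul_assoc, adjugate_mul, Matrix.mul_smul, Matrix.mul_one]
  obtain ⟨u, hu⟩ := hdet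
  have hU : (1 + of C * N.adjugate).det = u := by
    rw [← mul_cancel_left_mem_nonZeroDivisors hN, hu, mul_comm, ← det_mul, ← hM]
  exact mem_orbit_GL_iff.mpr ⟨_, hU ▸ u.isUnit, hM⟩

theorem mem_orbit_GL_of_map_mk_eq {M N : Matrix n n R} {d : R} (hd : d ∈ nonZeroDivisors R)
    (hM : Associated M.det d) (hN : Associated N.det d)
    (hMN : M.map (Ideal.Quotient.mk (Ideal.span {d})) =
      N.map (Ideal.Quotient.mk (Ideal.span {d}))) :
    M ∈ MulAction.orbit (GL n R) N := by
  have hN_reg : N.det ∈ nonZeroDivisors R := by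
    obtain ⟨u, rfl⟩ := hN
    exact (mul_mem_nonZeroDivisors.mp hd).1
  refine mem_orbit_GL_of_det_dvd_sub hN_reg (hN.trans hM.symm) fun i j ↦ hN.dvd.trans ?_
  rw [← Ideal.mem_span_singleton, ← Ideal.Quotient.eq]
  exact congrFun₂ hMN i j

theorem finite_orbits_GL_of_associated_det {d : R} (hd : d ∈ nonZeroDivisors R)
    [Finite (R ⧸ Ideal.span {d})] :
    (Quotient.mk (MulAction.orbitRel (GL n R) (Matrix n n R)) ''
      {M | Associated M.det d}).Finite := by
  obtain ⟨S, hS, hrep⟩ := exists_finset_existsUnique_map_eq (T := {M | Associated M.det d})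
    (Set.toFinite ((fun M : Matrix n n R ↦ M.map (Ideal.Quotient.mk (Ideal.span {d}))) '' _))
  refine (S.finite_toSet.image (Quotient.mk _)).subset ?_
  rintro _ ⟨M, hM, rfl⟩
  obtain ⟨N, ⟨hN, hMN⟩, -⟩ := hrep M hM
  exact ⟨N, hN, (Quotient.sound (mem_orbit_GL_of_map_mk_eq hd hM (hS N hN) hMN)).symm⟩

theorem stmt_13_general {α : Type*} (F : α → Matrix n n R) {d : R} (hd : d ∈ nonZeroDivisors R)
    [Finite (R ⧸ Ideal.span {d})] :
    ∃ S : Finset α, (∀ Y ∈ S, Associated (F Y).det d) ∧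
      ∀ X, Associated (F X).det d → ∃! Y, Y ∈ S ∧ F X ∈ MulAction.orbit (GL n R) (F Y) := by
  have hfin : ((fun X ↦ Quotient.mk (MulAction.orbitRel (GL n R) (Matrix n n R)) (F X)) ''
      {X | Associated (F X).det d}).Finite :=
    (finite_orbits_GL_of_associated_det hd).subset <| by
      rintro _ ⟨X, hX, rfl⟩
      exact ⟨F X, hX, rfl⟩
  simpa only [Set.mem_ofPred_eq, Quotient.eq, MulAction.orbitRel_apply]
    using exists_finset_existsUnique_map_eq hfin

end LeftEquivalence

section Solutions

variable {r k : ℕ} {A : Matrix (Fin r) (Fin (r + k)) ℤ} {X X' : Matrix (Fin k) (Fin (r + k)) ℤ}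

theorem isSolution_iff_associated_det {d : ℤ} :
    IsSolution A d X ↔ Associated (stack A X).det d :=
  Int.associated_iff.symm

theorem laEquiv_iff_mem_orbit_GL :
    LAEquiv A X X' ↔ stack A X ∈ MulAction.orbit (GL (Fin (r + k)) ℤ) (stack A X') := by
  simp only [mem_orbit_GL_iff, Int.isUnit_iff, LAEquiv, Unimodular]

end Solutions

/-- There is a finite set of solutions such that every solution is L-A-equivalent to
exactly one of them: the L-A-equivalence classes form a finite partition of the set
of all solutions. -/
theorem stmt_13 {r k : ℕ} (hr : 0 < r) (hk : 0 < k)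
    (A : Matrix (Fin r) (Fin (r + k)) ℤ) (hrank : A.rank = r)
    (d : ℤ) (hd : 0 < d) (hdvd : greatestDivisor A ∣ d) :
    ∃ S : Finset (Matrix (Fin k) (Fin (r + k)) ℤ),
      (∀ Y ∈ S, IsSolution A d Y) ∧
      ∀ X, IsSolution A d X → ∃! Y, Y ∈ S ∧ LAEquiv A X Y := by
  have : NeZero d := ⟨hd.ne'⟩
  simpa only [isSolution_iff_associated_det, laEquiv_iff_mem_orbit_GL]
    using stmt_13_general (stack A) (mem_nonZeroDivisors_of_ne_zero hd.ne')
end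

section
/- Let A be an r×n integer matrix of rank r with 0 < r < n, let d be a positive integer, and let X and X′ be two solutions of |det [A;X]| = d. If W is an n×n unimodular matrix with [A;X] = W·[A;X′], then W has the block lower triangular form [[I, O],[Λ, W′]], where I is the r×r identity matrix, O is the r×(n−r) zero block, Λ is an (n−r)×r integer matrix, and W′ is an (n−r)×(n−r) unimodular matrix. -/
open Matrix

/-!
Reading off the top rows of `[A; X] = W [A; X']` gives `A = P [A; X']`, where `P` consists of the
top rows of `W`; but also `A = [I, O] [A; X']`. As its determinant is nonzero, `[A; X']` has
linearly independent rows, so it can be cancelled on the right and `P = [I, O]`. Hence `W` is block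
lower triangular with an identity block in the corner, and its determinant is that of the remaining
diagonal block.
-/

section BlockRows

variable {R l m n p : Type*}

theorem mul_left_injective_of_linearIndependent_row [Semiring R] [Fintype m] {B : Matrix m p R}
    (hB : LinearIndependent R B.row) :
    Function.Injective fun C : Matrix l m R ↦ C * B := by
  intro C D (hCD : C * B = D * B)
  exact ext_row fun i ↦ vecMul_injective_iff.mpr hB (congrArg (row · i) hCD)

theorem eq_fromCols_one_zero_of_mul_fromRows_eq [Semiring R] [Fintype m] [Fintype n]
    [DecidableEq m] {A : Matrix m p R} {X : Matrix n p R} {P : Matrix m (m ⊕ n) R}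
    (hAX : LinearIndependent R (fromRows A X).row) (hP : P * fromRows A X = A) :
    P = fromCols 1 0 := by
  apply mul_left_injective_of_linearIndependent_row hAX
  simp only [hP, fromCols_mul_fromRows, Matrix.one_mul, Matrix.zero_mul, add_zero]

theorem det_toBlocks₂₂_eq_det [CommRing R] [Fintype m] [Fintype n] [DecidableEq m]
    [DecidableEq n] {W : Matrix (m ⊕ n) (m ⊕ n) R} (h₁₁ : W.toBlocks₁₁ = 1)
    (h₁₂ : W.toBlocks₁₂ = 0) : W.toBlocks₂₂.det = W.det := by
  conv_rhs => rw [← fromBlocks_toBlocks W, h₁₁, h₁₂, det_fromBlocks_zero₁₂, det_one, one_mul]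

theorem stmt_14_general [CommRing R] [Fintype m] [Fintype n] [DecidableEq m] [DecidableEq n]
    {A : Matrix m p R} {X X' : Matrix n p R} {W : Matrix (m ⊕ n) (m ⊕ n) R}
    (hAX' : LinearIndependent R (fromRows A X').row)
    (h : fromRows A X = W * fromRows A X') :
    W.toBlocks₁₁ = 1 ∧ W.toBlocks₁₂ = 0 ∧ W.toBlocks₂₂.det = W.det := by
  have hA : W.toRows₁ * fromRows A X' = A := congrArg toRows₁ h.symm
  have hrows : W.toRows₁ = fromCols 1 0 := eq_fromCols_one_zero_of_mul_fromRows_eq hAX' hA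
  have h₁₁ : W.toBlocks₁₁ = 1 := congrArg toCols₁ hrows
  have h₁₂ : W.toBlocks₁₂ = 0 := congrArg toCols₂ hrows
  exact ⟨h₁₁, h₁₂, det_toBlocks₂₂_eq_det h₁₁ h₁₂⟩

end BlockRows

section Stack

variable {r k : ℕ}

theorem fromRows_eq_submatrix_mul_of_stack_eq_mul {n : ℕ} {A : Matrix (Fin r) (Fin n) ℤ}
    {X X' : Matrix (Fin k) (Fin n) ℤ} {W : Matrix (Fin (r + k)) (Fin (r + k)) ℤ}
    (h : stack A X = W * stack A X') :
    fromRows A X = W.submatrix finSumFinEquiv finSumFinEquiv * fromRows A X' := by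
  simpa [stack, ← submatrix_mul_equiv _ _ _ finSumFinEquiv] using
    congrArg (submatrix · finSumFinEquiv id) h

theorem IsSolution.linearIndependent_row_fromRows {A : Matrix (Fin r) (Fin (r + k)) ℤ} {d : ℤ}
    {X : Matrix (Fin k) (Fin (r + k)) ℤ} (hX : IsSolution A d X) (hd : d ≠ 0) :
    LinearIndependent ℤ (fromRows A X).row := by
  have hdet : (stack A X).det ≠ 0 := by
    rcases hX with h | h <;> simpa [h] using hd
  exact (linearIndependent_equiv finSumFinEquiv.symm).mp
    (linearIndependent_rows_of_det_ne_zero hdet)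

end Stack

/-- If `X`, `X'` are two solutions of `|det [A; X]| = d` and `[A; X] = W · [A; X']`
with `W` unimodular, then `W` has the block lower triangular form
`[[I, O], [Λ, W']]`: the top-left `r × r` block is the identity, the top-right block
is zero, and the bottom-right `(n-r) × (n-r)` block is unimodular (the bottom-left
block `Λ` being an arbitrary integer matrix). -/
theorem stmt_14 {r k : ℕ} (hr : 0 < r) (hk : 0 < k)
    (A : Matrix (Fin r) (Fin (r + k)) ℤ) (hrank : A.rank = r)
    (d : ℤ) (hd : 0 < d)
    (X X' : Matrix (Fin k) (Fin (r + k)) ℤ)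
    (hX : IsSolution A d X) (hX' : IsSolution A d X')
    (W : Matrix (Fin (r + k)) (Fin (r + k)) ℤ) (hW : Unimodular W)
    (h : stack A X = W * stack A X') :
    W.submatrix (Fin.castAdd k) (Fin.castAdd k) = 1 ∧
    W.submatrix (Fin.castAdd k) (Fin.natAdd r) = 0 ∧
    Unimodular (W.submatrix (Fin.natAdd r) (Fin.natAdd r)) := by
  obtain ⟨h₁₁, h₁₂, hdet⟩ := stmt_14_general (hX'.linearIndependent_row_fromRows hd.ne')
    (fromRows_eq_submatrix_mul_of_stack_eq_mul h)
  rw [det_submatrix_equiv_self] at hdet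
  exact ⟨h₁₁, h₁₂, hW.imp hdet.trans hdet.trans⟩
end

section
/- Let p be a prime, and let n and k be positive integers. Then the number of k×k integer matrices in left Hermite normal form with determinant equal to pⁿ is ∑ p^{nk − (j₁ + j₂ + ⋯ + jₙ)}, where the sum ranges over all integer tuples with 1 ≤ j₁ ≤ j₂ ≤ ⋯ ≤ jₙ ≤ k. -/
open Matrix

/-!
The determinant of a matrix in left Hermite normal form is the product of its diagonal `d`, and a
diagonal entry `d j` leaves `d j` choices for each of the `k - 1 - j` entries below it. So the
number of such matrices of determinant `N` is `∑ ∏ j, d j ^ (k - 1 - j)` over the factorizations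
`N = ∏ j, d j`. For `N = p ^ n` these are `d j = p ^ e j` with `∑ j, e j = n`, and the sum becomes
the complete homogeneous symmetric polynomial of degree `n` evaluated at `p ^ (k - 1), …, p, 1`.
Writing its monomials as weakly increasing words in the variables gives the formula.
-/

namespace LHNF

variable {k : ℕ}

/-- The values that the `(i, j)` entry of a matrix in left Hermite normal form with diagonal `d`
may take. -/
noncomputable def entryRange (d : Fin k → ℕ) (i j : Fin k) : Finset ℤ :=
  if i < j then {0} else if j < i then Finset.Ico 0 (d j : ℤ) else {(d j : ℤ)}

/-- The matrices in left Hermite normal form with diagonal `d`, provided that the entries of `d`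
are positive. -/
noncomputable def withDiag (d : Fin k → ℕ) : Finset (Matrix (Fin k) (Fin k) ℤ) :=
  Fintype.piFinset fun i => Fintype.piFinset (entryRange d i)

theorem card_entryRange (d : Fin k → ℕ) (i j : Fin k) :
    (entryRange d i j).card = if j < i then d j else 1 := by
  rcases lt_trichotomy i j with hij | rfl | hji
  · simp [entryRange, hij, hij.not_gt]
  · simp [entryRange]
  · simp [entryRange, hji, hji.not_gt]

theorem card_withDiag (d : Fin k → ℕ) :
    (withDiag d).card = ∏ j, d j ^ (k - 1 - j) := by
  calc (withDiag d).card = ∏ i, ∏ j, if j < i then d j else 1 := by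
        simp only [withDiag, Matrix, Fintype.card_piFinset, card_entryRange]
    _ = ∏ j, ∏ _i ∈ Finset.Ioi j, d j := by
        rw [Finset.prod_comm]
        simp only [← Finset.prod_filter, Finset.filter_lt_eq_Ioi]
    _ = ∏ j, d j ^ (k - 1 - j) := by
        simp only [Finset.prod_const, Fin.card_Ioi]

variable {d : Fin k → ℕ} {H : Matrix (Fin k) (Fin k) ℤ}

theorem mem_withDiag_iff_forall_mem_entryRange :
    H ∈ withDiag d ↔ ∀ i j, H i j ∈ entryRange d i j :=
  Fintype.mem_piFinset.trans (forall_congr' fun _ => Fintype.mem_piFinset)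

theorem mem_withDiag (hd : ∀ i, 0 < d i) :
    H ∈ withDiag d ↔ LHNF H ∧ ∀ i, H i i = d i := by
  rw [mem_withDiag_iff_forall_mem_entryRange]
  constructor
  · intro h
    have hdiag : ∀ i, H i i = d i := fun i => by simpa [entryRange] using h i i
    refine ⟨⟨fun i j hij => ?_, fun i => ?_, fun i j hji => ?_⟩, hdiag⟩
    · simpa [entryRange, hij] using h i j
    · rw [hdiag]
      exact_mod_cast hd i
    · simpa [entryRange, hji, hji.not_gt, hdiag] using h i j
  · rintro ⟨⟨h_upper, -, h_lower⟩, hdiag⟩ i j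
    rcases lt_trichotomy i j with hij | rfl | hji
    · simp [entryRange, hij, h_upper i j hij]
    · simp [entryRange, hdiag]
    · simpa [entryRange, hji, hji.not_gt, hdiag] using h_lower i j hji

theorem det_eq_prod_diag (hH : LHNF H) : H.det = ∏ i, H i i :=
  Matrix.det_of_isLowerTriangular H fun i j hij => hH.1 i j hij

theorem det_eq_natCast_iff (hH : LHNF H) {N : ℕ} :
    H.det = N ↔ ∃ d ∈ Nat.finMulAntidiag k N, ∀ i, H i i = d i := by
  rw [hH.det_eq_prod_diag]
  constructor
  · intro hN
    choose d hdiag using fun i => Int.eq_ofNat_of_zero_le (hH.2.1 i).le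
    have hprod : ∏ i, d i = N := by
      simp only [hdiag] at hN
      exact_mod_cast hN
    have hd_pos : ∀ i, 0 < d i := fun i => by exact_mod_cast hdiag i ▸ hH.2.1 i
    refine ⟨d, Nat.mem_finMulAntidiag.2 ⟨hprod, ?_⟩, hdiag⟩
    exact hprod ▸ (Finset.prod_pos fun i _ => hd_pos i).ne'
  · rintro ⟨d, hd, hdiag⟩
    simp only [hdiag, ← Nat.prod_eq_of_mem_finMulAntidiag hd, Nat.cast_prod]

theorem card_det_eq (k N : ℕ) :
    Nat.card {H : Matrix (Fin k) (Fin k) ℤ // LHNF H ∧ H.det = N} =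
      ∑ d ∈ Nat.finMulAntidiag k N, ∏ j, d j ^ (k - 1 - j) := by
  have mem_iff {d} (hd : d ∈ Nat.finMulAntidiag k N) (H : Matrix (Fin k) (Fin k) ℤ) :
      H ∈ withDiag d ↔ LHNF H ∧ ∀ i, H i i = d i :=
    mem_withDiag fun i => Nat.pos_of_ne_zero (Nat.ne_zero_of_mem_finMulAntidiag hd i)
  have disjoint : (Nat.finMulAntidiag k N : Set (Fin k → ℕ)).PairwiseDisjoint withDiag := by
    intro d hd d' hd' hne
    refine Finset.disjoint_left.2 fun H hH hH' => hne (funext fun i => ?_)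
    have hdiag : H i i = d i := ((mem_iff hd H).1 hH).2 i
    have hdiag' : H i i = d' i := ((mem_iff hd' H).1 hH').2 i
    exact_mod_cast hdiag.symm.trans hdiag'
  rw [Nat.subtype_card ((Nat.finMulAntidiag k N).biUnion withDiag), Finset.card_biUnion disjoint]
  · simp only [card_withDiag]
  · intro H
    calc H ∈ (Nat.finMulAntidiag k N).biUnion withDiag
        ↔ ∃ d ∈ Nat.finMulAntidiag k N, LHNF H ∧ ∀ i, H i i = d i := by
          simp only [Finset.mem_biUnion]
          exact exists_congr fun d => and_congr_right fun hd => mem_iff hd H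
      _ ↔ LHNF H ∧ ∃ d ∈ Nat.finMulAntidiag k N, ∀ i, H i i = d i := by
          simp only [and_left_comm, exists_and_left]
      _ ↔ LHNF H ∧ H.det = N := and_congr_right fun hH => hH.det_eq_natCast_iff.symm

end LHNF

theorem finMulAntidiag_prime_pow {p : ℕ} (hp : p.Prime) (k n : ℕ) :
    Nat.finMulAntidiag k (p ^ n) =
      (Finset.univ.piAntidiag n).image fun (e : Fin k → ℕ) j => p ^ e j := by
  ext d
  simp only [Nat.mem_finMulAntidiag, Finset.mem_image, Finset.mem_piAntidiag, Finset.mem_univ,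
    implies_true, and_true]
  constructor
  · rintro ⟨hd, -⟩
    have h_dvd : ∀ j, d j ∣ p ^ n := fun j => hd ▸ Finset.dvd_prod_of_mem d (Finset.mem_univ j)
    choose e _ he using fun j => (Nat.dvd_prime_pow hp).1 (h_dvd j)
    obtain rfl : d = fun j => p ^ e j := funext he
    rw [Finset.prod_pow_eq_pow_sum] at hd
    exact ⟨e, Nat.pow_right_injective hp.two_le hd, rfl⟩
  · rintro ⟨e, rfl, rfl⟩
    exact ⟨Finset.prod_pow_eq_pow_sum _ _ _, pow_ne_zero _ hp.ne_zero⟩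

theorem sum_piAntidiag_prod_pow_eq_sum_sym {α : Type*} [Fintype α] [DecidableEq α]
    {R : Type*} [CommSemiring R] (x : α → R) (n : ℕ) :
    ∑ e ∈ Finset.univ.piAntidiag n, ∏ a, x a ^ e a =
      ∑ s : Sym α n, ((s : Multiset α).map x).prod := by
  let φ := Sym.equivNatSumOfFintype α n
  let := Fintype.ofEquiv _ φ
  rw [Finset.sum_subtype (p := fun e => ∑ a, e a = n) _ (by simp)]
  refine (Fintype.sum_equiv φ _ _ fun s => ?_).symm
  simp only [φ, Sym.coe_equivNatSumOfFintype_apply_apply]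
  rw [Finset.prod_multiset_map_count]
  refine Finset.prod_subset (Finset.subset_univ _) fun a _ ha => ?_
  rw [Multiset.count_eq_zero.2 (mt Multiset.mem_toFinset.2 ha), pow_zero]

section MonotoneTuples

variable {α : Type*} [LinearOrder α] {n : ℕ}

variable (α n) in
/-- Monotone `n`-tuples correspond to multisets of cardinality `n`, a multiset being listed in
increasing order. -/
noncomputable def monotoneEquivSym : {f : Fin n → α // Monotone f} ≃ Sym α n :=
  Equiv.ofBijective (fun f => ⟨List.ofFn f.1, by simp⟩) <| by
    constructor
    · intro f g hfg
      have h_perm : (List.ofFn f.1).Perm (List.ofFn g.1) :=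
        Multiset.coe_eq_coe.1 (congrArg Subtype.val hfg)
      exact Subtype.ext <| List.ofFn_injective <|
        h_perm.eq_of_sortedLE f.2.sortedLE_ofFn g.2.sortedLE_ofFn
    · rintro ⟨s, hs⟩
      have h_sorted : (s.sort (· ≤ ·)).SortedLE := (s.pairwise_sort _).sortedLE
      obtain rfl : (s.sort (· ≤ ·)).length = n := by rw [s.length_sort, hs]
      refine ⟨⟨(s.sort (· ≤ ·)).get, h_sorted.monotone_get⟩, Subtype.ext ?_⟩
      simp only [List.ofFn_get, s.sort_eq]

theorem coe_monotoneEquivSym (f : {f : Fin n → α // Monotone f}) :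
    (monotoneEquivSym α n f : Multiset α) = List.ofFn f.1 :=
  rfl

theorem sum_piAntidiag_prod_pow_eq_sum_monotone [Fintype α] {R : Type*} [CommSemiring R]
    (x : α → R) (n : ℕ) :
    ∑ e ∈ Finset.univ.piAntidiag n, ∏ a, x a ^ e a =
      ∑ f : Fin n → α with Monotone f, ∏ i, x (f i) := by
  rw [sum_piAntidiag_prod_pow_eq_sum_sym, Finset.sum_subtype (p := Monotone) _ (by simp)]
  refine (Fintype.sum_equiv (monotoneEquivSym α n) _ _ fun f => ?_).symm
  simp [coe_monotoneEquivSym, List.prod_ofFn]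

end MonotoneTuples

theorem sum_sub_one_sub_val {ι : Type*} [Fintype ι] {k : ℕ} (f : ι → Fin k) :
    ∑ i, (k - 1 - (f i : ℕ)) = Fintype.card ι * k - ∑ i, ((f i : ℕ) + 1) := by
  calc ∑ i, (k - 1 - (f i : ℕ)) = ∑ i, (k - ((f i : ℕ) + 1)) := by
        simp only [Nat.sub_sub, add_comm]
    _ = ∑ _i : ι, k - ∑ i, ((f i : ℕ) + 1) :=
        Finset.sum_tsub_distrib _ fun i _ => (f i).isLt
    _ = Fintype.card ι * k - ∑ i, ((f i : ℕ) + 1) := by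
        rw [Finset.sum_const, Finset.card_univ, smul_eq_mul]

/-- The number of `k × k` integer matrices in left Hermite normal form with
determinant `p ^ n` is `∑ p ^ (n·k − (j₁ + ⋯ + jₙ))`, the sum ranging over all
tuples `1 ≤ j₁ ≤ j₂ ≤ ⋯ ≤ jₙ ≤ k`.  Such tuples are encoded as monotone functions
`f : Fin n → Fin k` via `jᵢ = f i + 1`. -/
theorem stmt_17 (p : ℕ) (hp : p.Prime) (n k : ℕ) (hn : 0 < n) (hk : 0 < k) :
    Nat.card {H : Matrix (Fin k) (Fin k) ℤ // LHNF H ∧ H.det = (p : ℤ) ^ n} =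
      ∑ f ∈ Finset.univ.filter (fun f : Fin n → Fin k => ∀ i j, i ≤ j → f i ≤ f j),
        p ^ (n * k - ∑ i, ((f i : ℕ) + 1)) := by
  have pow_injective : Function.Injective fun (e : Fin k → ℕ) j => p ^ e j :=
    (Nat.pow_right_injective hp.two_le).comp_left
  calc Nat.card {H : Matrix (Fin k) (Fin k) ℤ // LHNF H ∧ H.det = (p : ℤ) ^ n}
      = ∑ d ∈ Nat.finMulAntidiag k (p ^ n), ∏ j, d j ^ (k - 1 - j) := by
        exact_mod_cast LHNF.card_det_eq k (p ^ n)
    _ = ∑ e ∈ Finset.univ.piAntidiag n, ∏ j : Fin k, (p ^ (k - 1 - j)) ^ e j := by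
        rw [finMulAntidiag_prime_pow hp, Finset.sum_image pow_injective.injOn]
        simp only [pow_right_comm]
    _ = ∑ f : Fin n → Fin k with Monotone f, ∏ i, p ^ (k - 1 - f i) :=
        sum_piAntidiag_prod_pow_eq_sum_monotone _ n
    _ = ∑ f : Fin n → Fin k with ∀ i j, i ≤ j → f i ≤ f j,
          p ^ (n * k - ∑ i, ((f i : ℕ) + 1)) := by
        simp only [Finset.prod_pow_eq_pow_sum, sum_sub_one_sub_val, Fintype.card_fin, Monotone]
end

section
/- Let k be a positive integer and for a positive integer m let H_k(m) denote the number of k×k integer matrices in left Hermite normal form with determinant m. Then H_k is multiplicative: if m and m′ are coprime positive integers, H_k(m·m′) = H_k(m)·H_k(m′). -/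
open Matrix

/-- `H_k m`: the number of `k × k` integer matrices in left Hermite normal form with
determinant `m`. -/
noncomputable def Hcount (k : ℕ) (m : ℕ) : ℕ :=
  Nat.card {H : Matrix (Fin k) (Fin k) ℤ // LHNF H ∧ H.det = (m : ℤ)}

/-!
Deleting the first row and column of a Hermite form of size `k + 1` with corner entry `d` leaves a
Hermite form of size `k`, and the `k` deleted entries below `d` are arbitrary residues modulo `d`.
Hence `H_{k+1}(m) = ∑_{d e = m} d ^ k * H_k(e)`: the function `H_k` is the Dirichlet convolution of
the power functions `n ↦ n ^ j` for `j < k`, and convolution preserves multiplicativity.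
-/

section BorderedMatrix

variable {R : Type*} {k : ℕ}

/-- The block lower triangular matrix `[[d, 0], [c, H]]`, which adjoins a first row and a first
column to `H`. -/
def borderedMatrix [Zero R] (d : R) (c : Fin k → R) (H : Matrix (Fin k) (Fin k) R) :
    Matrix (Fin (k + 1)) (Fin (k + 1)) R :=
  of (vecCons (vecCons d 0) fun i => vecCons (c i) (H i))

lemma borderedMatrix_inj [Zero R] {d d' : R} {c c' : Fin k → R}
    {H H' : Matrix (Fin k) (Fin k) R} :
    borderedMatrix d c H = borderedMatrix d' c' H' ↔ d = d' ∧ c = c' ∧ H = H' := by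
  simp [borderedMatrix, ← Matrix.ext_iff, Fin.forall_fin_succ, funext_iff, forall_and, and_assoc]

lemma borderedMatrix_submatrix_succ [Zero R] {H : Matrix (Fin (k + 1)) (Fin (k + 1)) R}
    (hH : ∀ j : Fin k, H 0 j.succ = 0) :
    borderedMatrix (H 0 0) (fun i => H i.succ 0) (H.submatrix Fin.succ Fin.succ) = H := by
  simp [borderedMatrix, ← Matrix.ext_iff, Fin.forall_fin_succ, hH]

lemma det_borderedMatrix [CommRing R] (d : R) (c : Fin k → R) (H : Matrix (Fin k) (Fin k) R) :
    (borderedMatrix d c H).det = d * H.det := by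
  have minor_eq : (borderedMatrix d c H).submatrix Fin.succ Fin.succ = H := rfl
  rw [det_succ_row_zero, Fin.sum_univ_succ, Fin.succAbove_zero, minor_eq]
  simp [borderedMatrix]

end BorderedMatrix

section LHNF

variable {k : ℕ}

lemma lhnf_borderedMatrix_iff {d : ℤ} {c : Fin k → ℤ} {H : Matrix (Fin k) (Fin k) ℤ} :
    LHNF (borderedMatrix d c H) ↔ 0 < d ∧ (∀ i, 0 ≤ c i ∧ c i < d) ∧ LHNF H := by
  simp [LHNF, borderedMatrix, Fin.forall_fin_succ, forall_and, and_assoc, and_left_comm]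

lemma LHNF.det_pos {H : Matrix (Fin k) (Fin k) ℤ} (hH : LHNF H) : 0 < H.det := by
  rw [det_of_isLowerTriangular H fun i j hij => hH.1 i j hij]
  exact Finset.prod_pos fun i _ => hH.2.1 i

lemma LHNF.exists_eq_borderedMatrix {H : Matrix (Fin (k + 1)) (Fin (k + 1)) ℤ} (hH : LHNF H) :
    ∃ (d : ℕ) (c : Fin k → Fin d) (H' : Matrix (Fin k) (Fin k) ℤ),
      LHNF H' ∧ borderedMatrix (d : ℤ) (fun i => (c i : ℤ)) H' = H := by
  have hborder := borderedMatrix_submatrix_succ fun j => hH.1 0 j.succ j.succ_pos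
  obtain ⟨hd, hc, hH'⟩ := lhnf_borderedMatrix_iff.1 (hborder.symm ▸ hH)
  refine ⟨(H 0 0).toNat, fun i => ⟨(H i.succ 0).toNat, (Int.toNat_lt_toNat hd).2 (hc i).2⟩,
    _, hH', ?_⟩
  simpa only [Int.toNat_of_nonneg hd.le, Int.toNat_of_nonneg (hc _).1] using hborder

end LHNF

/-- The `k × k` integer matrices in left Hermite normal form with determinant `m`, the type whose
cardinality is `Hcount k m`. -/
abbrev HermiteMatrix (k m : ℕ) : Type :=
  {H : Matrix (Fin k) (Fin k) ℤ // LHNF H ∧ H.det = (m : ℤ)}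

namespace HermiteMatrix

/-- Adjoining a first column: for `d * e = m`, the `k` entries below a corner entry `d` range freely
over the residues modulo `d`, and the remaining block over the Hermite forms of determinant `e`. -/
def border (k m : ℕ) :
    (Σ p : m.divisorsAntidiagonal, (Fin k → Fin p.1.1) × HermiteMatrix k p.1.2) →
      HermiteMatrix (k + 1) m :=
  fun ⟨⟨(d, e), hp⟩, c, H⟩ => ⟨borderedMatrix (d : ℤ) (fun i => (c i : ℤ)) H.1, by
    have hd : 0 < d := Nat.pos_of_ne_zero (Nat.ne_zero_of_mem_divisorsAntidiagonal hp).1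
    have hmul : d * e = m := (Nat.mem_divisorsAntidiagonal.1 hp).1
    refine ⟨lhnf_borderedMatrix_iff.2 ⟨mod_cast hd, fun i => ?_, H.2.1⟩, ?_⟩
    · exact ⟨Int.natCast_nonneg _, mod_cast (c i).isLt⟩
    · rw [det_borderedMatrix, H.2.2, ← Nat.cast_mul, hmul]⟩

lemma border_injective (k m : ℕ) : Function.Injective (border k m) := by
  rintro ⟨⟨⟨d, e⟩, hp⟩, c, H, hH, he⟩ ⟨⟨⟨d', e'⟩, hp'⟩, c', H', hH', he'⟩ h
  obtain ⟨hd, hc, rfl⟩ := borderedMatrix_inj.1 (congrArg Subtype.val h)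
  obtain rfl : d = d' := mod_cast hd
  obtain rfl : e = e' := mod_cast he.symm.trans he'
  obtain rfl : c = c' := funext fun i => Fin.ext (mod_cast congrFun hc i)
  rfl

lemma border_surjective (k m : ℕ) : Function.Surjective (border k m) := by
  rintro ⟨H, hH, hdet⟩
  have hm : m ≠ 0 := Nat.cast_ne_zero.1 (hdet ▸ hH.det_pos.ne')
  obtain ⟨d, c, H', hH', rfl⟩ := hH.exists_eq_borderedMatrix
  obtain ⟨e, he⟩ := Int.eq_ofNat_of_zero_le hH'.det_pos.le
  rw [det_borderedMatrix, he] at hdet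
  have hp : (d, e) ∈ m.divisorsAntidiagonal :=
    Nat.mem_divisorsAntidiagonal.2 ⟨mod_cast hdet, hm⟩
  exact ⟨⟨⟨(d, e), hp⟩, c, H', hH', he⟩, rfl⟩

instance (k m : ℕ) : Finite (HermiteMatrix k m) := by
  induction k generalizing m with
  | zero => infer_instance
  | succ k ih => exact Finite.of_surjective _ (border_surjective k m)

end HermiteMatrix

lemma Hcount_zero_right (k : ℕ) : Hcount k 0 = 0 := by
  have : IsEmpty (HermiteMatrix k 0) := ⟨fun ⟨_, hH, hdet⟩ => hH.det_pos.ne' hdet⟩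
  exact Nat.card_of_isEmpty

lemma Hcount_zero_left (m : ℕ) : Hcount 0 m = if m = 1 then 1 else 0 := by
  by_cases hm : m = 1
  · simp [Hcount, LHNF, hm]
  · have : IsEmpty (HermiteMatrix 0 m) :=
      ⟨fun ⟨_, _, hdet⟩ => hm (mod_cast hdet.symm.trans det_fin_zero)⟩
    rw [if_neg hm]
    exact Nat.card_of_isEmpty

lemma Hcount_succ (k m : ℕ) :
    Hcount (k + 1) m = ∑ p ∈ m.divisorsAntidiagonal, p.1 ^ k * Hcount k p.2 := by
  calc Hcount (k + 1) m
      = Nat.card (Σ p : m.divisorsAntidiagonal, (Fin k → Fin p.1.1) × HermiteMatrix k p.1.2) :=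
        (Nat.card_eq_of_bijective _
          ⟨HermiteMatrix.border_injective k m, HermiteMatrix.border_surjective k m⟩).symm
    _ = ∑ p : m.divisorsAntidiagonal, p.1.1 ^ k * Hcount k p.1.2 := by
        simp only [Nat.card_sigma, Nat.card_prod, Nat.card_fun, Nat.card_fin, Hcount]
    _ = ∑ p ∈ m.divisorsAntidiagonal, p.1 ^ k * Hcount k p.2 :=
        Finset.sum_coe_sort m.divisorsAntidiagonal fun p => p.1 ^ k * Hcount k p.2

/-- The counting function `H_k` as an arithmetic function, so that Dirichlet convolution applies. -/
noncomputable def hermiteCount (k : ℕ) : ArithmeticFunction ℕ :=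
  ⟨Hcount k, Hcount_zero_right k⟩

lemma hermiteCount_zero : hermiteCount 0 = 1 := by
  ext m
  rw [ArithmeticFunction.one_apply]
  exact Hcount_zero_left m

lemma hermiteCount_succ (k : ℕ) :
    hermiteCount (k + 1) = ArithmeticFunction.pow k * hermiteCount k := by
  ext m
  rw [ArithmeticFunction.mul_apply]
  refine (Hcount_succ k m).trans (Finset.sum_congr rfl fun p hp => ?_)
  have hp₁ : p.1 ≠ 0 := (Nat.ne_zero_of_mem_divisorsAntidiagonal hp).1
  simp [ArithmeticFunction.pow_apply, hp₁, hermiteCount]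

lemma isMultiplicative_hermiteCount (k : ℕ) : (hermiteCount k).IsMultiplicative := by
  induction k with
  | zero => exact hermiteCount_zero ▸ ArithmeticFunction.isMultiplicative_one
  | succ k ih => exact hermiteCount_succ k ▸ ArithmeticFunction.isMultiplicative_pow.mul ih

/-- The counting function `H_k` is multiplicative on coprime arguments. -/
theorem stmt_18 (k : ℕ) (hk : 0 < k) (m m' : ℕ) (hm : 0 < m) (hm' : 0 < m')
    (hcop : Nat.Coprime m m') :
    Hcount k (m * m') = Hcount k m * Hcount k m' :=
  (isMultiplicative_hermiteCount k).map_mul_of_coprime hcop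
end
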